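/- One-shot Marton inner bound with common message, pre-elimination form. Let 0 < ε < 1 and set L := log₂(1/ε). Let U₀, U₁, U₂ be finite sets, let p be a probability distribution on U₀ × U₁ × U₂, and for each (u₀,u₁,u₂) let ρ_{u₀,u₁,u₂} be a density matrix on ℂ^{d₁} ⊗ ℂ^{d₂}. Let ρ^{U₀U₁U₂Y₁Y₂} := Σ_{u₀,u₁,u₂} p(u₀,u₁,u₂) |u₀,u₁,u₂⟩⟨u₀,u₁,u₂| ⊗ ρ_{u₀,u₁,u₂} be the associated cq-state, and compute all hypothesis testing (conditional) mutual informations below with respect to it and its marginals (Y₁ obtained by tracing out ℂ^{d₂}, Y₂ by tracing out ℂ^{d₁}). Let M₀, M₁, M₂ be positive integers and r₁, r₂ positive integers such that: log₂ M₀ + log₂ M₁ + r₁ ≤ I_H^ε(U₀U₁ : Y₁) − 2 − L; log₂ M₀ + log₂ M₂ + r₂ ≤ I_H^ε(U₀U₂ : Y₂) − 2 − L; log₂ M₁ + r₁ ≤ I_H^ε(U₁ : Y₁ | U₀) − 2 − L; log₂ M₂ + r₂ ≤ I_H^ε(U₂ : Y₂ | U₀) − 2 − L; and r₁ + r₂ ≥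 I_∞^ε(U₁ : U₂ | U₀)_p + 2L. Then there exists an (M₀, M₁, M₂, 2⁷·ε^{1/6}) broadcast code for the family {ρ_{u₀,u₁,u₂}}. -/

import Mathlib

/-!
The code is obtained from a random superposition codebook, in which the pair of satellite words is
chosen by a likelihood encoder and each receiver decodes in two nested stages.

*Codebook.* For each common message an independent cloud centre is drawn from the law of `U₀`.
Around it there are `M₁ · 2^r₁` independent satellites from the law of `U₁` given `U₀`, and
`M₂ · 2^r₂` independent satellites from the law of `U₂` given `U₀`. They are grouped into `M₁` and
`M₂` bins, one for each private message. To send `(m₀, m₁, m₂)` the encoder picks a pair from the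
two bins with probability proportional to the density `h` of a smoothed input law `P' ≤ p` relative
to the conditional product law, normalised by `max (∑ h) (2^r₁ 2^r₂)` (`sel`). This denominator
never vanishes. It makes the law of the chosen triple dominated by `p` pointwise (`sel_dom`), so
every error event can be evaluated under `p`. The probability of choosing nothing is `O(√ε)`,
by the second-moment estimate `sel_cover`. This is the mutual covering lemma, with `h` bounded
through the max relative entropy.

*Decoding.* A receiver has a test for the pair (centre, satellite) against the product of its law
with the output state, and a conditional test that identifies the satellite given the centre. The
tests over one bin are merged into one operator by `exists_union`. Then `exists_packing` turns a
family of operators into a POVM; it replaces the square-root measurement by the rational expression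
`4 (1+S)⁻¹ T (1+S)⁻¹`, so that only polynomial operator identities are needed. `exists_measurement`
nests these: the bin index is decoded first for each fixed centre, and the result is sandwiched by
the operator that recognises the centre. All estimates are Loewner inequalities linear in the
tests, hence they pass to expectations, where a wrong codeword is independent of the transmitted one
and is accepted with probability at most the type II error (`receiver_bound`).

*Conclusion.* With the weight `t = 1/√ε` in the union each receiver errs with probability at most
`22.5 √ε`, and the covering step loses `1.75 √ε`. Thus the average over codebooks of the success
probability is at least `1 − 46.75 √ε`, and some codebook, with the best satellite pair for each
message, is at least as good (`exists_code_of_weights`). Finally `46.75 √ε ≤ 2⁷ ε^(1/6)`.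
-/

open Kronecker ComplexOrder

noncomputable section

/-- The ℓ₁-distance between two real-valued functions on a finite set. -/
def l1dist {S : Type*} [Fintype S] (P Q : S → ℝ) : ℝ := ∑ s, |P s - Q s|

/-- A probability distribution on a finite set: nonnegative and summing to one. -/
def IsProbDist {S : Type*} [Fintype S] (P : S → ℝ) : Prop :=
  (∀ s, 0 ≤ P s) ∧ ∑ s, P s = 1

/-- The ε-smooth max relative entropy `D_∞^ε(P‖Q)`, as an extended real. -/
def Dmax {X : Type*} [Fintype X] (ε : ℝ) (P Q : X → ℝ) : EReal :=
  sInf ((fun d : ℝ => (d : EReal)) ''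
    {d | ∃ P' : X → ℝ, (∀ x, 0 ≤ P' x ∧ P' x ≤ P x) ∧ l1dist P P' ≤ ε ∧
      ∀ x, P' x ≤ (2 : ℝ) ^ d * Q x})

/-- The ε-smooth max conditional mutual information `I_∞^ε(U₁ : U₂ | U₀)_P`. -/
def smoothImaxCond {U0 U1 U2 : Type*} [Fintype U0] [Fintype U1] [Fintype U2]
    (ε : ℝ) (P : U0 × U1 × U2 → ℝ) : EReal :=
  Dmax ε P (fun u =>
    (∑ b, P (u.1, u.2.1, b)) * (∑ a, P (u.1, a, u.2.2)) / (∑ a, ∑ b, P (u.1, a, b)))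

/-- A density matrix: positive semidefinite with trace one. -/
def IsDensity {ι : Type*} [Fintype ι] (ρ : Matrix ι ι ℂ) : Prop :=
  ρ.PosSemidef ∧ ρ.trace = 1

/-- A POVM element: `0 ≤ E ≤ I` in the Loewner order. -/
def IsPOVMElem {ι : Type*} [Fintype ι] [DecidableEq ι] (E : Matrix ι ι ℂ) : Prop :=
  E.PosSemidef ∧ ((1 : Matrix ι ι ℂ) - E).PosSemidef

/-- The hypothesis testing relative entropy `D_H^ε(α‖β)`, as an extended real:
the supremum of all `d : ℝ` such that some POVM element `E` accepts `α` with probability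
at least `1 − ε` while accepting `β` with probability at most `2^{−d}`. -/
def DH {ι : Type*} [Fintype ι] [DecidableEq ι] (ε : ℝ) (α β : Matrix ι ι ℂ) : EReal :=
  sSup ((fun d : ℝ => (d : EReal)) ''
    {d | ∃ E : Matrix ι ι ℂ, IsPOVMElem E ∧ 1 - ε ≤ ((E * α).trace).re ∧
      ((E * β).trace).re ≤ (2 : ℝ) ^ (-d)})

/-- The classical-quantum state `Σ_u |u⟩⟨u| ⊗ σ_u` (the weights are included in `σ`). -/
def cqState {U ι : Type*} [Fintype U] [DecidableEq U] [Fintype ι]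
    (σ : U → Matrix ι ι ℂ) : Matrix (U × ι) (U × ι) ℂ :=
  Matrix.of fun x y => if x.1 = y.1 then σ x.1 x.2 y.2 else 0

/-- Partial trace over the second (right) tensor factor. -/
def trR {α β : Type*} [Fintype α] [Fintype β]
    (M : Matrix (α × β) (α × β) ℂ) : Matrix α α ℂ :=
  Matrix.of fun a a' => ∑ b, M (a, b) (a', b)

/-- Partial trace over the first (left) tensor factor. -/
def trL {α β : Type*} [Fintype α] [Fintype β]
    (M : Matrix (α × β) (α × β) ℂ) : Matrix β β ℂ :=
  Matrix.of fun b b' => ∑ a, M (a, b) (a, b')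

section Marton

variable {U0 U1 U2 : Type*} [Fintype U0] [Fintype U1] [Fintype U2]
  [DecidableEq U0] [DecidableEq U1] [DecidableEq U2] {d1 d2 : ℕ}

/-- `I_H^ε(U₀U₁ : Y₁)` for the cq-state `Σ p(u₀,u₁,u₂)|u₀u₁u₂⟩⟨u₀u₁u₂| ⊗ ρ_{u₀u₁u₂}`. -/
def IH_U0U1_Y1 (ε : ℝ) (p : U0 × U1 × U2 → ℝ)
    (ρ : U0 × U1 × U2 → Matrix (Fin d1 × Fin d2) (Fin d1 × Fin d2) ℂ) : EReal :=
  DH ε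
    (cqState fun v : U0 × U1 =>
      ∑ u2, (p (v.1, v.2, u2) : ℂ) • trR (ρ (v.1, v.2, u2)))
    (cqState fun v : U0 × U1 =>
      ((∑ u2, p (v.1, v.2, u2) : ℝ) : ℂ) • ∑ u, (p u : ℂ) • trR (ρ u))

/-- `I_H^ε(U₀U₂ : Y₂)`. -/
def IH_U0U2_Y2 (ε : ℝ) (p : U0 × U1 × U2 → ℝ)
    (ρ : U0 × U1 × U2 → Matrix (Fin d1 × Fin d2) (Fin d1 × Fin d2) ℂ) : EReal :=
  DH ε
    (cqState fun v : U0 × U2 =>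
      ∑ u1, (p (v.1, u1, v.2) : ℂ) • trL (ρ (v.1, u1, v.2)))
    (cqState fun v : U0 × U2 =>
      ((∑ u1, p (v.1, u1, v.2) : ℝ) : ℂ) • ∑ u, (p u : ℂ) • trL (ρ u))

/-- `I_H^ε(U₁ : Y₁ | U₀)`. -/
def IH_U1_Y1_cond_U0 (ε : ℝ) (p : U0 × U1 × U2 → ℝ)
    (ρ : U0 × U1 × U2 → Matrix (Fin d1 × Fin d2) (Fin d1 × Fin d2) ℂ) : EReal :=
  DH ε
    (cqState fun v : U0 × U1 =>
      ∑ u2, (p (v.1, v.2, u2) : ℂ) • trR (ρ (v.1, v.2, u2)))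
    (cqState fun v : U0 × U1 =>
      (((∑ u2, p (v.1, v.2, u2)) / (∑ a, ∑ b, p (v.1, a, b)) : ℝ) : ℂ) •
        ∑ a, ∑ b, (p (v.1, a, b) : ℂ) • trR (ρ (v.1, a, b)))

/-- `I_H^ε(U₂ : Y₂ | U₀)`. -/
def IH_U2_Y2_cond_U0 (ε : ℝ) (p : U0 × U1 × U2 → ℝ)
    (ρ : U0 × U1 × U2 → Matrix (Fin d1 × Fin d2) (Fin d1 × Fin d2) ℂ) : EReal :=
  DH ε
    (cqState fun v : U0 × U2 =>
      ∑ u1, (p (v.1, u1, v.2) : ℂ) • trL (ρ (v.1, u1, v.2)))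
    (cqState fun v : U0 × U2 =>
      (((∑ u1, p (v.1, u1, v.2)) / (∑ a, ∑ b, p (v.1, a, b)) : ℝ) : ℂ) •
        ∑ a, ∑ b, (p (v.1, a, b) : ℂ) • trL (ρ (v.1, a, b)))

/-- Existence of an `(M₀, M₁, M₂, δ)` broadcast code for the channel outputs
`ρ_{u₀,u₁,u₂}`: an encoder and POVMs for the two receivers whose average success
probability is at least `1 − δ`. -/
def ExistsBroadcastCode
    (ρ : U0 × U1 × U2 → Matrix (Fin d1 × Fin d2) (Fin d1 × Fin d2) ℂ)
    (M0 M1 M2 : ℕ) (δ : ℝ) : Prop :=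
  ∃ (Enc : Fin M0 × Fin M1 × Fin M2 → U0 × U1 × U2)
    (Λ : Fin M0 × Fin M1 → Matrix (Fin d1) (Fin d1) ℂ)
    (Λ' : Fin M0 × Fin M2 → Matrix (Fin d2) (Fin d2) ℂ),
    (∀ m, (Λ m).PosSemidef) ∧
    ((1 : Matrix (Fin d1) (Fin d1) ℂ) - ∑ m, Λ m).PosSemidef ∧
    (∀ m, (Λ' m).PosSemidef) ∧
    ((1 : Matrix (Fin d2) (Fin d2) ℂ) - ∑ m, Λ' m).PosSemidef ∧
    1 - δ ≤ ((M0 * M1 * M2 : ℝ))⁻¹ * ∑ m : Fin M0 × Fin M1 × Fin M2,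
      (((Λ (m.1, m.2.1) ⊗ₖ Λ' (m.1, m.2.2)) * ρ (Enc m)).trace).re

end Marton

open scoped MatrixOrder

/-! ### Operator inequalities and nested measurements -/

section MatrixLemmas
variable {n : Type*} [Fintype n] [DecidableEq n]

omit [DecidableEq n] in
lemma conj_nonneg' {A C : Matrix n n ℂ} (hA : 0 ≤ A) (hC : IsSelfAdjoint C) :
    0 ≤ C * A * C := hC.conjugate_nonneg hA

omit [Fintype n] in
lemma posDef_one_add {S : Matrix n n ℂ} (hS : 0 ≤ S) : (1 + S).PosDef :=
  Matrix.PosDef.one.add_posSemidef (Matrix.nonneg_iff_posSemidef.1 hS)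

/-- A Loewner inequality may be checked after conjugating by the inverse `G` of a self-adjoint
matrix `H`. -/
lemma le_of_conj {G H X Y : Matrix n n ℂ} (hH : IsSelfAdjoint H) (h1 : H * G = 1)
    (h2 : G * H = 1) (h : 0 ≤ G * (Y - X) * G) : X ≤ Y := by
  have := conj_nonneg' h hH
  have e : H * (G * (Y - X) * G) * H = Y - X := by
    calc _ = (H * G) * (Y - X) * (G * H) := by noncomm_ring
      _ = _ := by rw [h1, h2]; simp
  rw [e] at this
  exact sub_nonneg.1 this

lemma exists_inv_one_add {S : Matrix n n ℂ} (hS : 0 ≤ S) :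
    ∃ H : Matrix n n ℂ, 0 ≤ H ∧ H * (1 + S) = 1 ∧ (1 + S) * H = 1 := by
  have h := posDef_one_add hS
  have hu : IsUnit (1 + S).det := (Matrix.isUnit_iff_isUnit_det _).1 h.isUnit
  exact ⟨(1 + S)⁻¹, h.inv.posSemidef.nonneg, Matrix.nonsing_inv_mul _ hu,
    Matrix.mul_nonsing_inv _ hu⟩

/-- A family of tests `T i` can be turned into a POVM that loses, for each `i`, only the defect of
`T i` and the competing tests. With `S = ∑ T j` one takes `4 (1+S)⁻¹ (T i) (1+S)⁻¹`. The sum is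
`4 S (1+S)⁻² ≤ 1`, and the lower bound becomes manifest on conjugating by `1 + S`. -/
lemma exists_packing {ι : Type*} [Fintype ι] (T : ι → Matrix n n ℂ)
    (h0 : ∀ i, 0 ≤ T i) (h1 : ∀ i, T i ≤ 1) :
    ∃ Λ : ι → Matrix n n ℂ, (∀ i, 0 ≤ Λ i) ∧ ∑ i, Λ i ≤ 1 ∧
      ∀ i, 2 * T i - ∑ j, T j ≤ Λ i := by
  set S := ∑ j, T j with hS
  have hS0 : 0 ≤ S := Finset.sum_nonneg fun i _ => h0 i
  obtain ⟨H, hH0, hHG, hGH⟩ := exists_inv_one_add hS0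
  have sH := IsSelfAdjoint.of_nonneg hH0
  have sS := IsSelfAdjoint.of_nonneg hS0
  have s1S : IsSelfAdjoint (1 - S) := (IsSelfAdjoint.one _).sub sS
  have hcancel : ∀ X : Matrix n n ℂ, (1 + S) * (H * X * H) * (1 + S) = X := fun X => by
    calc _ = ((1 + S) * H) * X * (H * (1 + S)) := by noncomm_ring
      _ = X := by rw [hHG, hGH]; simp
  refine ⟨fun i => 4 * (H * T i * H), fun i => ?_, ?_, fun i => ?_⟩
  · have := conj_nonneg' (h0 i) sH
    have e : 4 * (H * T i * H) = (H * T i * H) + (H * T i * H) + (H * T i * H) + (H * T i * H) := by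
      noncomm_ring
    simp only [e]; positivity
  · have e : ∑ i, 4 * (H * T i * H) = 4 * (H * S * H) := by
      rw [hS, Finset.mul_sum, Finset.sum_mul, Finset.mul_sum]
    rw [e]
    refine le_of_conj sH hHG hGH ?_
    have : (1 + S) * (1 - 4 * (H * S * H)) * (1 + S) = (1 - S) * 1 * (1 - S) := by
      calc _ = (1 + S) * (1 + S) - 4 * ((1 + S) * (H * S * H) * (1 + S)) := by noncomm_ring
        _ = _ := by rw [hcancel]; noncomm_ring
    rw [this]
    exact conj_nonneg' zero_le_one s1S
  · refine le_of_conj sH hHG hGH ?_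
    have : (1 + S) * (4 * (H * T i * H) - (2 * T i - S)) * (1 + S) =
        ((1 - S) * T i * (1 - S) + (1 - S) * T i * (1 - S)) +
        (S * (1 - T i) * S + S * (1 - T i) * S + S * (1 - T i) * S + S * (1 - T i) * S) +
        (1 - S) * S * (1 - S) := by
      calc _ = 4 * ((1 + S) * (H * T i * H) * (1 + S)) - (1 + S) * (2 * T i - S) * (1 + S) := by
            noncomm_ring
        _ = _ := by rw [hcancel]; noncomm_ring
    rw [this]
    have a1 := conj_nonneg' (h0 i) s1S
    have a2 := conj_nonneg' (sub_nonneg.2 (h1 i)) sS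
    have a3 := conj_nonneg' hS0 s1S
    positivity

omit [Fintype n] [DecidableEq n] in
lemma mat_smul_nonneg {t : ℝ} (ht : 0 ≤ t) {A : Matrix n n ℂ} (hA : 0 ≤ A) : 0 ≤ t • A :=
  ((Matrix.nonneg_iff_posSemidef.1 hA).smul ht).nonneg

/-- An operator standing for the union of the tests `P k`: it is at most `t` times their sum, and it
accepts whatever some `P k` accepts, up to the error `1 / (1 + t)`. One takes
`1 - (1 + t ∑ P k)⁻¹`. -/
lemma exists_union {κ : Type*} [Fintype κ] (P : κ → Matrix n n ℂ)
    (h0 : ∀ i, 0 ≤ P i) (h1 : ∀ i, P i ≤ 1) {t : ℝ} (ht : 0 < t) :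
    ∃ A : Matrix n n ℂ, 0 ≤ A ∧ A ≤ 1 ∧ A ≤ t • ∑ k, P k ∧
      ∀ k, 1 - A ≤ (1 / (1 + t)) • 1 + (1 - P k) := by
  set S := t • ∑ k, P k with hS
  have hS0 : 0 ≤ S := mat_smul_nonneg ht.le (Finset.sum_nonneg fun i _ => h0 i)
  obtain ⟨H, hH0, hHG, hGH⟩ := exists_inv_one_add hS0
  have sH := IsSelfAdjoint.of_nonneg hH0
  have sS := IsSelfAdjoint.of_nonneg hS0
  have hHS : H * S = 1 - H := by rw [mul_add, mul_one] at hHG; rw [← hHG]; abel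
  have hSH : S * H = 1 - H := by rw [add_mul, one_mul] at hGH; rw [← hGH]; abel
  have hcancel : ∀ X : Matrix n n ℂ, (1 + S) * (H * X * H) * (1 + S) = X := fun X => by
    calc _ = ((1 + S) * H) * X * (H * (1 + S)) := by noncomm_ring
      _ = X := by rw [hHG, hGH]; simp
  have hG2 : (1 + S) * H * (1 + S) = 1 + S := by rw [hGH, one_mul]
  refine ⟨1 - H, ?_, ?_, ?_, fun k => ?_⟩
  · refine le_of_conj sH hHG hGH ?_
    have : (1 + S) * (1 - H - 0) * (1 + S) = S + S * 1 * S := by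
      calc _ = (1 + S) * (1 + S) - (1 + S) * H * (1 + S) := by noncomm_ring
        _ = _ := by rw [hG2]; noncomm_ring
    rw [this]
    have := conj_nonneg' (zero_le_one (α := Matrix n n ℂ)) sS
    positivity
  · exact sub_le_self _ hH0
  · have : S - (1 - H) = S * H * S := by
      rw [hSH, sub_mul, hHS, one_mul]
    rw [← sub_nonneg, this]
    exact conj_nonneg' hH0 sS
  -- it suffices that `H ≤ 1 - τ P k` with `τ = t / (1 + t)`; this follows from antitonicity of
  -- the inverse, as `H ≤ (1 + t P k)⁻¹ ≤ 1 - τ P k`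
  · set τ := t / (1 + t) with hτ
    have hτ0 : 0 < τ := by positivity
    have hτ1 : 1 / (1 + t) + τ = 1 := by rw [hτ]; field_simp
    have hτ2 : τ * (1 + t) = t := by rw [hτ]; field_simp
    clear_value τ
    have key : H ≤ 1 - τ • P k := by
      have hP1 := sub_nonneg.2 (h1 k)
      have sP := IsSelfAdjoint.of_nonneg (h0 k)
      have hQ : 0 ≤ t • P k := mat_smul_nonneg ht.le (h0 k)
      obtain ⟨K, hK0, hKG, hGK⟩ := exists_inv_one_add hQ
      have sK := IsSelfAdjoint.of_nonneg hK0
      have hN : 0 ≤ S - t • P k := by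
        rw [hS, ← smul_sub]
        refine mat_smul_nonneg ht.le (sub_nonneg.2 ?_)
        exact Finset.single_le_sum (fun i _ => h0 i) (Finset.mem_univ k)
      have hHK : H ≤ K := by
        rw [← sub_nonneg]
        -- completing the square, as in the variational formula for the inverse
        have e : K - H = (K - H) * (1 + t • P k) * (K - H) + H * (S - t • P k) * H := by
          calc K - H = K * ((1 + t • P k) * K) - (K * (1 + t • P k)) * H
                - H * ((1 + t • P k) * K) + H * ((1 + S) * H) := by
                rw [hGK, hKG, hGH]; noncomm_ring
            _ = _ := by
                generalize t • P k = Q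
                noncomm_ring
        rw [e]
        exact add_nonneg (conj_nonneg' (add_nonneg zero_le_one hQ) (sK.sub sH))
          (conj_nonneg' hN sH)
      refine hHK.trans (le_of_conj sK hKG hGK ?_)
      have hcomm : 0 ≤ P k * (1 - P k) := by
        have e : P k * (1 - P k) = P k * (1 - P k) * P k + (1 - P k) * P k * (1 - P k) := by
          noncomm_ring
        rw [e]
        exact add_nonneg (conj_nonneg' hP1 sP) (conj_nonneg' (h0 k) (IsSelfAdjoint.of_nonneg hP1))
      have e : (1 + t • P k) * (1 - τ • P k - K) * (1 + t • P k) =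
          (t * τ) • (P k * (1 - P k)) + (t * τ * t) • (P k * (1 - P k) * P k) := by
        calc _ = (1 + t • P k) * (1 - τ • P k) * (1 + t • P k)
                - ((1 + t • P k) * K) * (1 + t • P k) := by
                generalize t • P k = Q
                generalize τ • P k = Q'
                noncomm_ring
          _ = _ := by
            rw [hGK]
            have hτ3 : t * τ = t - τ := by linarith
            simp only [mul_add, add_mul, mul_sub, sub_mul, mul_one, one_mul, smul_mul_assoc,
              mul_smul_comm, smul_sub, smul_smul, mul_assoc]
            match_scalars <;> first | ring1 | linear_combination -hτ3 | linear_combination -t * hτ3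
      rw [e]
      have := conj_nonneg' hP1 sP
      exact add_nonneg (mat_smul_nonneg (by positivity) hcomm)
        (mat_smul_nonneg (by positivity) this)
    have e : (1 - (1 - H)) = H := by abel
    rw [e]
    refine key.trans ?_
    rw [← sub_nonneg]
    have : (1 / (1 + t)) • (1 : Matrix n n ℂ) + (1 - P k) - (1 - τ • P k) =
        (1 / (1 + t)) • (1 - P k) := by
      have e2 : τ = 1 - 1 / (1 + t) := by linarith
      rw [e2]; module
    rw [this]
    exact mat_smul_nonneg (by positivity) (sub_nonneg.2 (h1 k))

/-- If `A` and `Y` are both close to `1`, then so is `A * Y * A`. No commutativity is needed; this is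
a gentle-measurement bound that is linear in the two defects. -/
lemma sandwich_ge {A Y : Matrix n n ℂ} (hA0 : 0 ≤ A) (hA1 : A ≤ 1) (hY0 : 0 ≤ Y) (hY1 : Y ≤ 1) :
    1 - 2 * (1 - Y) - 3 * (1 - A) ≤ A * Y * A := by
  have sA := IsSelfAdjoint.of_nonneg hA0
  have hE := sub_nonneg.2 hA1
  have sE := IsSelfAdjoint.of_nonneg hE
  have hZ := sub_nonneg.2 hY1
  rw [← sub_nonneg]
  have : A * Y * A - (1 - 2 * (1 - Y) - 3 * (1 - A)) =
      (1 + (1 - A)) * (1 - Y) * (1 + (1 - A)) + (1 - A) * A * (1 - A) + A * (1 - A) * A +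
      ((1 - A) * Y * (1 - A) + (1 - A) * Y * (1 - A)) := by
    noncomm_ring
  rw [this]
  have a1 := conj_nonneg' hZ ((IsSelfAdjoint.one _).add sE)
  have a2 := conj_nonneg' hA0 sE
  have a3 := conj_nonneg' hE sA
  have a4 := conj_nonneg' hY0 sE
  positivity

/-- Two-stage decoding. `P i j k` tests the centre `i` together with the satellite `(j, k)`, and
`Q i j k` tests the satellite given the centre. The resulting POVM identifies `(i, j)`. Its defect
is bounded linearly by the defects of the two correct tests, by the tests `Q` of the other bins for
the same centre, and by the tests `P` of the other centres. -/
lemma exists_measurement {I J K : Type*} [Fintype I] [Fintype J] [Fintype K]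
    [DecidableEq I] [DecidableEq J] (P Q : I → J → K → Matrix n n ℂ)
    (hP0 : ∀ i j k, 0 ≤ P i j k) (hP1 : ∀ i j k, P i j k ≤ 1)
    (hQ0 : ∀ i j k, 0 ≤ Q i j k) (hQ1 : ∀ i j k, Q i j k ≤ 1) {t : ℝ} (ht : 0 < t) :
    ∃ Λ : I × J → Matrix n n ℂ, (∀ m, 0 ≤ Λ m) ∧ ∑ m, Λ m ≤ 1 ∧ ∀ i j k,
      1 - Λ (i, j) ≤ 4 • ((1 / (1 + t)) • 1 + (1 - Q i j k)) +
        4 • (∑ j' ∈ Finset.univ.erase j, t • ∑ k', Q i j' k') +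
        6 • ((1 / (1 + t)) • 1 + (1 - P i j k)) +
        ∑ i' ∈ Finset.univ.erase i, t • ∑ j', ∑ k', P i' j' k' := by
  choose A hA0 hA1 hAle hAge using fun i => exists_union (fun x : J × K => P i x.1 x.2)
    (fun x => hP0 i x.1 x.2) (fun x => hP1 i x.1 x.2) ht
  choose B hB0 hB1 hBle hBge using fun i j => exists_union (fun k : K => Q i j k)
    (hQ0 i j) (hQ1 i j) ht
  choose Y hY0 hYs hYge using fun i => exists_packing (B i) (hB0 i) (hB1 i)
  have hY1 : ∀ i j, Y i j ≤ 1 := fun i j =>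
    (Finset.single_le_sum (fun j _ => hY0 i j) (Finset.mem_univ j)).trans (hYs i)
  have sA : ∀ i, IsSelfAdjoint (A i) := fun i => IsSelfAdjoint.of_nonneg (hA0 i)
  have hAA : ∀ i, A i * A i ≤ A i := fun i => by
    have e : A i - A i * A i = (1 - A i) * A i * (1 - A i) + A i * (1 - A i) * A i := by
      noncomm_ring
    rw [← sub_nonneg, e]
    exact add_nonneg (conj_nonneg' (hA0 i) (IsSelfAdjoint.of_nonneg (sub_nonneg.2 (hA1 i))))
      (conj_nonneg' (sub_nonneg.2 (hA1 i)) (sA i))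
  have hAYA : ∀ i (Z : Matrix n n ℂ), Z ≤ 1 → A i * Z * A i ≤ A i := fun i Z hZ => by
    refine le_trans ?_ (hAA i)
    have := (sA i).conjugate_le_conjugate hZ
    simpa using this
  obtain ⟨Λ, hΛ0, hΛs, hΛge⟩ := exists_packing (fun m : I × J => A m.1 * Y m.1 m.2 * A m.1)
    (fun m => conj_nonneg' (hY0 _ _) (sA _))
    (fun m => (hAYA _ _ (hY1 _ _)).trans (hA1 _))
  refine ⟨Λ, hΛ0, hΛs, fun i j k => ?_⟩
  have hS : ∑ m : I × J, A m.1 * Y m.1 m.2 * A m.1 ≤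
      1 + ∑ i' ∈ Finset.univ.erase i, t • ∑ j', ∑ k', P i' j' k' := by
    rw [Fintype.sum_prod_type]
    have e : ∀ x, ∑ y, A x * Y x y * A x = A x * (∑ y, Y x y) * A x := fun x => by
      rw [Finset.mul_sum, Finset.sum_mul]
    simp only [e]
    rw [← Finset.add_sum_erase _ _ (Finset.mem_univ i)]
    refine add_le_add ((hAYA i _ (hYs i)).trans (hA1 i)) (Finset.sum_le_sum fun i' _ => ?_)
    refine (hAYA i' _ (hYs i')).trans ((hAle i').trans_eq ?_)
    rw [Fintype.sum_prod_type]
  have hB : ∑ j', B i j' ≤ B i j + ∑ j' ∈ Finset.univ.erase j, t • ∑ k', Q i j' k' := by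
    rw [← Finset.add_sum_erase _ _ (Finset.mem_univ j)]
    exact add_le_add le_rfl (Finset.sum_le_sum fun j' _ => hBle i j')
  have hsw := sandwich_ge (hA0 i) (hA1 i) (hY0 i j) (hY1 i j)
  have h1 := hΛge (i, j)
  have h2 := hYge i j
  have h3 := hAge i (j, k)
  have h4 := hBge i j k
  set N1 := ∑ i' ∈ Finset.univ.erase i, t • ∑ j', ∑ k', P i' j' k'
  set N2 := ∑ j' ∈ Finset.univ.erase j, t • ∑ k', Q i j' k'
  set S1 := ∑ m : I × J, A m.1 * Y m.1 m.2 * A m.1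
  set S2 := ∑ j', B i j'
  set c : Matrix n n ℂ := (1 / (1 + t)) • 1
  rw [← sub_nonneg] at h1 h2 h3 h4 hsw hB hS ⊢
  have e : 4 • (c + (1 - Q i j k)) + 4 • N2 + 6 • (c + (1 - P i j k)) + N1 - (1 - Λ (i, j)) =
      (Λ (i, j) - (2 * (A i * Y i j * A i) - S1)) + (1 + N1 - S1) +
      2 • (A i * Y i j * A i - (1 - 2 * (1 - Y i j) - 3 * (1 - A i))) +
      4 • (Y i j - (2 * B i j - S2)) + 4 • (B i j + N2 - S2) +
      6 • (c + (1 - P i j k) - (1 - A i)) + 4 • (c + (1 - Q i j k) - (1 - B i j)) := by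
    noncomm_ring
  rw [e]
  have := nsmul_nonneg hsw 2
  have := nsmul_nonneg h2 4
  have := nsmul_nonneg hB 4
  have := nsmul_nonneg h3 6
  have := nsmul_nonneg h4 4
  positivity

/-! ### Trace functionals and partial traces -/

/-- The real-linear functional `M ↦ Re Tr(M σ)`: the acceptance probability of `M` on `σ`. -/
def trf (σ : Matrix n n ℂ) : Matrix n n ℂ →ₗ[ℝ] ℝ where
  toFun M := (M * σ).trace.re
  map_add' M N := by simp [add_mul]
  map_smul' r M := by simp

lemma trf_nonneg {σ M : Matrix n n ℂ} (hσ : σ.PosSemidef) (hM : 0 ≤ M) : 0 ≤ trf σ M := by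
  obtain ⟨B, rfl⟩ := CStarAlgebra.nonneg_iff_eq_star_mul_self.1 hM
  have := (hσ.mul_mul_conjTranspose_same B).trace_nonneg
  rw [Matrix.trace_mul_comm, ← mul_assoc] at this
  exact (Complex.le_def.1 this).1

lemma trf_mono {σ M N : Matrix n n ℂ} (hσ : σ.PosSemidef) (h : M ≤ N) : trf σ M ≤ trf σ N := by
  have := trf_nonneg hσ (sub_nonneg.2 h)
  rw [map_sub] at this
  linarith

lemma trf_one {σ : Matrix n n ℂ} (hσ : σ.trace = 1) : trf σ 1 = 1 := by
  simp [trf, hσ]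

lemma trR_psd {d1 d2 : ℕ} {ρ : Matrix (Fin d1 × Fin d2) (Fin d1 × Fin d2) ℂ} (hρ : ρ.PosSemidef) :
    (trR ρ).PosSemidef := by
  have : trR ρ = ∑ b, ρ.submatrix (fun a => (a, b)) (fun a => (a, b)) := by
    ext i j; simp [trR, Matrix.sum_apply]
  rw [this]
  exact Matrix.posSemidef_sum _ fun b _ => hρ.submatrix _

lemma trL_psd {d1 d2 : ℕ} {ρ : Matrix (Fin d1 × Fin d2) (Fin d1 × Fin d2) ℂ} (hρ : ρ.PosSemidef) :
    (trL ρ).PosSemidef := by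
  have : trL ρ = ∑ b, ρ.submatrix (fun a => (b, a)) (fun a => (b, a)) := by
    ext i j; simp [trL, Matrix.sum_apply]
  rw [this]
  exact Matrix.posSemidef_sum _ fun b _ => hρ.submatrix _

lemma trR_trace {d1 d2 : ℕ} (ρ : Matrix (Fin d1 × Fin d2) (Fin d1 × Fin d2) ℂ) :
    (trR ρ).trace = ρ.trace := by
  simp [trR, Matrix.trace, Fintype.sum_prod_type]

lemma trL_trace {d1 d2 : ℕ} (ρ : Matrix (Fin d1 × Fin d2) (Fin d1 × Fin d2) ℂ) :
    (trL ρ).trace = ρ.trace := by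
  simp only [trL, Matrix.trace, Fintype.sum_prod_type, Matrix.of_apply, Matrix.diag]
  exact Finset.sum_comm

/-- Union bound: on any bipartite state, `A ⊗ B` fails with probability at most the sum of the failure
probabilities of `A` and `B` on the reduced states, because `(1 - A) ⊗ (1 - B) ≥ 0`. -/
lemma trf_kron {d1 d2 : ℕ} {ρ : Matrix (Fin d1 × Fin d2) (Fin d1 × Fin d2) ℂ} (hρ : ρ.PosSemidef)
    (h1 : ρ.trace = 1) {A : Matrix (Fin d1) (Fin d1) ℂ} {B : Matrix (Fin d2) (Fin d2) ℂ}
    (hA : A ≤ 1) (hB : B ≤ 1) :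
    1 - trf (trR ρ) (1 - A) - trf (trL ρ) (1 - B) ≤ trf ρ (A ⊗ₖ B) := by
  have hk : 0 ≤ (1 - A) ⊗ₖ (1 - B) :=
    (Matrix.PosSemidef.kronecker hA hB).nonneg
  have := trf_nonneg hρ hk
  have e : (1 - A) ⊗ₖ (1 - B) = 1 ⊗ₖ 1 - (A ⊗ₖ 1) - (1 ⊗ₖ B) + A ⊗ₖ B := by
    ext i j
    simp only [Matrix.kroneckerMap_apply, Matrix.sub_apply, Matrix.add_apply]
    ring
  have eA : trf ρ (A ⊗ₖ 1) = trf (trR ρ) A := by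
    simp only [trf, LinearMap.coe_mk, AddHom.coe_mk, Matrix.trace, Matrix.diag, Matrix.mul_apply,
      Fintype.sum_prod_type, Matrix.kroneckerMap_apply, Matrix.one_apply, trR, Matrix.of_apply,
      mul_ite, mul_one, mul_zero, ite_mul, zero_mul, Finset.sum_ite_eq, Finset.mem_univ, if_true,
      Finset.mul_sum]
    congr 1
    exact Finset.sum_congr rfl fun i _ => Finset.sum_comm
  have eB : trf ρ (1 ⊗ₖ B) = trf (trL ρ) B := by
    simp only [trf, LinearMap.coe_mk, AddHom.coe_mk, Matrix.trace, Matrix.diag, Matrix.mul_apply,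
      Fintype.sum_prod_type, Matrix.kroneckerMap_apply, Matrix.one_apply, trL, Matrix.of_apply,
      ite_mul, one_mul, zero_mul, Finset.mul_sum]
    congr 1
    rw [Finset.sum_comm]
    refine Finset.sum_congr rfl fun i _ => ?_
    rw [Finset.sum_comm]
    rw [Finset.sum_comm (s := Finset.univ) (t := Finset.univ) (f := fun x y => B i x * ρ (y, x) (y, i))]
    refine Finset.sum_congr rfl fun x _ => ?_
    rw [Finset.sum_comm]
    simp
  rw [e, map_add, map_sub, map_sub, eA, eB, Matrix.one_kronecker_one, trf_one h1] at this
  rw [map_sub, map_sub, trf_one ((trR_trace ρ).trans h1), trf_one ((trL_trace ρ).trans h1)]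
  linarith

end MatrixLemmas

/-! ### Expectations and independent samples -/

section Prob

/-- The weighted sum `∑ q s * F s`; the expectation of `F` when `q` is a probability law. -/
noncomputable def Ex {S : Type*} [Fintype S] (q F : S → ℝ) : ℝ := ∑ s, q s * F s

/-- The law of a family of independent samples indexed by `ι`, each with law `q`. -/
noncomputable def piLaw {ι S : Type*} [Fintype ι] (q : S → ℝ) (f : ι → S) : ℝ := ∏ i, q (f i)

section Ex
variable {S T : Type*} [Fintype S] [Fintype T] {q : S → ℝ}

lemma Ex_mono (hq : ∀ s, 0 ≤ q s) {F G : S → ℝ} (h : ∀ s, F s ≤ G s) : Ex q F ≤ Ex q G :=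
  Finset.sum_le_sum fun s _ => mul_le_mul_of_nonneg_left (h s) (hq s)

lemma Ex_nonneg (hq : ∀ s, 0 ≤ q s) {F : S → ℝ} (h : ∀ s, 0 ≤ F s) : 0 ≤ Ex q F :=
  Finset.sum_nonneg fun s _ => mul_nonneg (hq s) (h s)

lemma Ex_const (hq : ∑ s, q s = 1) (c : ℝ) : Ex q (fun _ => c) = c := by
  simp [Ex, ← Finset.sum_mul, hq]

lemma Ex_add (F G : S → ℝ) : Ex q (fun s => F s + G s) = Ex q F + Ex q G := by
  simp [Ex, mul_add, Finset.sum_add_distrib]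

lemma Ex_sub (F G : S → ℝ) : Ex q (fun s => F s - G s) = Ex q F - Ex q G := by
  simp [Ex, mul_sub, Finset.sum_sub_distrib]

lemma Ex_mul_left (c : ℝ) (F : S → ℝ) : Ex q (fun s => c * F s) = c * Ex q F := by
  simp only [Ex, Finset.mul_sum]
  exact Finset.sum_congr rfl fun s _ => by ring

lemma Ex_sum {κ : Type*} (A : Finset κ) (F : κ → S → ℝ) :
    Ex q (fun s => ∑ k ∈ A, F k s) = ∑ k ∈ A, Ex q (F k) := by
  simp only [Ex, Finset.mul_sum]
  exact Finset.sum_comm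

lemma Ex_le_const (hq : ∀ s, 0 ≤ q s) (hq1 : ∑ s, q s = 1) {F : S → ℝ} {c : ℝ}
    (h : ∀ s, F s ≤ c) : Ex q F ≤ c :=
  (Ex_mono hq h).trans_eq (Ex_const hq1 c)

lemma exists_le_of_Ex_le (hq : ∀ s, 0 ≤ q s) (hq1 : ∑ s, q s = 1) {F : S → ℝ} {c : ℝ}
    (h : c ≤ Ex q F) : ∃ s, c ≤ F s := by
  by_contra! hc
  have h1 : 0 ≤ ∑ s, q s * (F s - c) := by
    simp only [mul_sub, Finset.sum_sub_distrib, ← Finset.sum_mul, hq1]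
    simpa [Ex] using h
  have h2 : ∀ s ∈ Finset.univ, q s * (F s - c) ≤ 0 := fun s _ =>
    mul_nonpos_of_nonneg_of_nonpos (hq s) (by linarith [hc s])
  have h3 := (Finset.sum_eq_zero_iff_of_nonpos h2).1 (le_antisymm (Finset.sum_nonpos h2) h1)
  have h4 : ∀ s, q s = 0 := fun s => by
    rcases mul_eq_zero.1 (h3 s (Finset.mem_univ s)) with h | h
    · exact h
    · linarith [hc s]
  simp [h4] at hq1

end Ex

section Pi
variable {ι S : Type*} [Fintype ι] [DecidableEq ι] [Fintype S] [DecidableEq S] {q : S → ℝ}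

omit [DecidableEq ι] [Fintype S] [DecidableEq S] in
lemma piLaw_nonneg (hq : ∀ s, 0 ≤ q s) (f : ι → S) : 0 ≤ piLaw q f :=
  Finset.prod_nonneg fun _ _ => hq _

omit [DecidableEq S] in
lemma piLaw_sum (hq : ∑ s, q s = 1) : ∑ f : ι → S, piLaw q f = 1 := by
  have := Fintype.prod_sum (fun (_ : ι) s => q s)
  simp only [hq, Finset.prod_const_one] at this
  simpa [piLaw] using this.symm

omit [DecidableEq S] in
lemma Ex_pi_two_aux (hq : ∑ s, q s = 1) {i j : ι} (hij : i ≠ j) (g g' : S → ℝ) :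
    Ex (piLaw q) (fun f : ι → S => g (f i) * g' (f j)) = Ex q g * Ex q g' := by
  have := Fintype.prod_sum (fun (l : ι) s =>
    q s * ((if l = i then g s else 1) * (if l = j then g' s else 1)))
  simp only [Finset.prod_mul_distrib, Finset.prod_ite_eq', Finset.mem_univ, if_true] at this
  simp only [Ex, piLaw]
  rw [← this, ← Finset.mul_prod_erase _ _ (Finset.mem_univ i),
    ← Finset.mul_prod_erase _ _ (Finset.mem_erase.2 ⟨hij.symm, Finset.mem_univ j⟩),
    Finset.prod_eq_one, mul_one]
  · simp [hij, hij.symm]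
  · intro l hl
    simp only [Finset.mem_erase] at hl
    simp [hl.1, hl.2.1, hq]

omit [DecidableEq S] in
lemma Ex_pi_one (hq : ∑ s, q s = 1) (i : ι) (g : S → ℝ) :
    Ex (piLaw q) (fun f : ι → S => g (f i)) = Ex q g := by
  have := Fintype.prod_sum (fun (l : ι) s => q s * (if l = i then g s else 1))
  simp only [Finset.prod_mul_distrib, Finset.prod_ite_eq', Finset.mem_univ, if_true] at this
  simp only [Ex, piLaw]
  rw [← this, ← Finset.mul_prod_erase _ _ (Finset.mem_univ i), Finset.prod_eq_one, mul_one]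
  · simp
  · intro l hl
    simp only [Finset.mem_erase] at hl
    simp [hl.1, hq]

/-- Two distinct coordinates of an independent family are independent. -/
lemma Ex_pi_two (hq : ∑ s, q s = 1) {i j : ι} (hij : i ≠ j) (g : S → S → ℝ) :
    Ex (piLaw q) (fun f : ι → S => g (f i) (f j)) = Ex q (fun s => Ex q (fun s' => g s s')) := by
  have h : ∀ f : ι → S, g (f i) (f j) = ∑ x, (if f i = x then 1 else 0) * g x (f j) := fun f => by
    simp
  simp only [h]
  rw [Ex_sum]
  have h2 := fun x => Ex_pi_two_aux hq hij (fun s => if s = x then 1 else 0) (g x)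
  simp only [h2]
  simp [Ex]

end Pi

/-! ### Mutual covering with a likelihood encoder -/

section Cover
variable {U1 U2 K1 K2 : Type*} [Fintype U1] [Fintype U2] [Fintype K1] [Fintype K2]
  [DecidableEq U1] [DecidableEq U2] [DecidableEq K1] [DecidableEq K2]

/-- The probability with which the likelihood encoder selects the index pair `k` from the two lists
`x` and `y`. The weights are proportional to `h`. The normaliser is the larger of their sum and
the number `|K1| * |K2|` of pairs, so the total may be less than one; the missing mass is the
probability that encoding fails. -/
noncomputable def sel (h : U1 → U2 → ℝ) (x : K1 → U1) (y : K2 → U2) (k : K1 × K2) : ℝ :=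
  h (x k.1) (y k.2) /
    max (∑ l : K1 × K2, h (x l.1) (y l.2)) ((Fintype.card K1 : ℝ) * Fintype.card K2)

variable {a : U1 → ℝ} {b : U2 → ℝ} {h : U1 → U2 → ℝ} {H : ℝ}
  (ha : ∀ u, 0 ≤ a u) (ha1 : ∑ u, a u = 1) (hb : ∀ u, 0 ≤ b u) (hb1 : ∑ u, b u = 1)
  (hh : ∀ u v, 0 ≤ h u v)

omit [Fintype U1] [Fintype U2] [DecidableEq U1] [DecidableEq U2] [DecidableEq K1]
  [DecidableEq K2] in
include hh in
lemma sel_nonneg (x : K1 → U1) (y : K2 → U2) (k : K1 × K2) : 0 ≤ sel h x y k :=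
  div_nonneg (hh _ _) (le_max_of_le_right (by positivity))

omit [Fintype U1] [Fintype U2] [DecidableEq U1] [DecidableEq U2] [DecidableEq K1]
  [DecidableEq K2] in
lemma sel_sum_le (x : K1 → U1) (y : K2 → U2) : ∑ k, sel h x y k ≤ 1 := by
  simp only [sel, ← Finset.sum_div]
  exact div_le_one_of_le₀ (le_max_left _ _) (le_max_of_le_right (by positivity))

omit [Fintype U1] [Fintype U2] [DecidableEq U1] [DecidableEq U2] [DecidableEq K1]
  [DecidableEq K2] in
include hh in
lemma sel_le [Nonempty K1] [Nonempty K2] (x : K1 → U1) (y : K2 → U2) (k : K1 × K2) :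
    sel h x y k ≤ ((Fintype.card K1 : ℝ) * Fintype.card K2)⁻¹ * h (x k.1) (y k.2) := by
  have : 0 < (Fintype.card K1 : ℝ) * Fintype.card K2 := by
    have := Fintype.card_pos (α := K1)
    have := Fintype.card_pos (α := K2)
    positivity
  rw [sel, div_eq_inv_mul]
  exact mul_le_mul_of_nonneg_right (inv_anti₀ this (le_max_right _ _)) (hh _ _)

omit [DecidableEq U1] [DecidableEq U2] in
include ha ha1 hb hb1 hh in
/-- The law of the selected pair is dominated by `a * b * h`, since the selection weight is at most
`h / (|K1| |K2|)`. -/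
lemma sel_dom [Nonempty K1] [Nonempty K2] (φ : U1 → U2 → ℝ) (hφ : ∀ u v, 0 ≤ φ u v) :
    Ex (piLaw a) (fun x : K1 → U1 => Ex (piLaw b) (fun y : K2 → U2 =>
      ∑ k, sel h x y k * φ (x k.1) (y k.2))) ≤ ∑ u, ∑ v, a u * b v * h u v * φ u v := by
  set N : ℝ := (Fintype.card K1 : ℝ) * Fintype.card K2 with hN
  have hN0 : 0 < N := by
    have := Fintype.card_pos (α := K1)
    have := Fintype.card_pos (α := K2)
    positivity
  have h1 : Ex (piLaw a) (fun x : K1 → U1 => Ex (piLaw b) (fun y : K2 → U2 =>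
      ∑ k, sel h x y k * φ (x k.1) (y k.2))) ≤
      Ex (piLaw a) (fun x : K1 → U1 => Ex (piLaw b) (fun y : K2 → U2 =>
      ∑ k : K1 × K2, N⁻¹ * (h (x k.1) (y k.2) * φ (x k.1) (y k.2)))) := by
    refine Ex_mono (piLaw_nonneg ha) fun x => Ex_mono (piLaw_nonneg hb) fun y =>
      Finset.sum_le_sum fun k _ => ?_
    rw [← mul_assoc]
    exact mul_le_mul_of_nonneg_right (sel_le hh x y k) (hφ _ _)
  refine h1.trans_eq ?_
  simp only [Ex_sum]
  have h2 : ∀ k : K1 × K2, Ex (piLaw a) (fun x : K1 → U1 => Ex (piLaw b) (fun y : K2 → U2 =>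
      N⁻¹ * (h (x k.1) (y k.2) * φ (x k.1) (y k.2)))) =
      N⁻¹ * ∑ u, ∑ v, a u * b v * h u v * φ u v := fun k => by
    simp only [Ex_mul_left]
    rw [Ex_pi_one ha1 k.1 (fun u => Ex (piLaw b) (fun y : K2 → U2 => h u (y k.2) * φ u (y k.2)))]
    have h3 := fun u => Ex_pi_one hb1 k.2 (fun v => h u v * φ u v)
    simp only [h3]
    simp only [Ex, Finset.mul_sum]
    exact Finset.sum_congr rfl fun u _ => Finset.sum_congr rfl fun v _ => by ring
  simp only [h2, Finset.sum_const, Finset.card_univ, Fintype.card_prod, nsmul_eq_mul,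
    Nat.cast_mul, ← hN]
  field_simp

variable (hH : ∀ u v, h u v ≤ H) (hca : ∀ u, a u * ∑ v, b v * h u v ≤ a u)
  (hcb : ∀ v, b v * ∑ u, a u * h u v ≤ b v)

include ha ha1 hb hb1 hh hH hca hcb in
/-- Second moments of `h` over pairs of positions. Positions sharing one coordinate contribute no more
than the mean, because the conditional means of `h` are at most one; only the diagonal terms see
the bound `H`. -/
lemma pair_moment (k l : K1 × K2) :
    Ex (piLaw a) (fun x : K1 → U1 => Ex (piLaw b) (fun y : K2 → U2 =>
      h (x k.1) (y k.2) * h (x l.1) (y l.2))) ≤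
      (∑ u, ∑ v, a u * b v * h u v) + if k = l then H * ∑ u, ∑ v, a u * b v * h u v else 0 := by
  set μ := ∑ u, ∑ v, a u * b v * h u v with hμ
  have hμ0 : 0 ≤ μ := Finset.sum_nonneg fun u _ => Finset.sum_nonneg fun v _ =>
    mul_nonneg (mul_nonneg (ha u) (hb v)) (hh u v)
  have hμ' : μ = ∑ u, a u * ∑ v, b v * h u v := by
    simp only [hμ, Finset.mul_sum, mul_assoc]
  have hμ'' : μ = ∑ v, b v * ∑ u, a u * h u v := by
    rw [hμ, Finset.sum_comm]
    simp only [Finset.mul_sum]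
    exact Finset.sum_congr rfl fun v _ => Finset.sum_congr rfl fun u _ => by ring
  obtain ⟨k1, k2⟩ := k
  obtain ⟨l1, l2⟩ := l
  by_cases e1 : k1 = l1 <;> by_cases e2 : k2 = l2
  · subst e1 e2
    simp only [if_true]
    rw [Ex_pi_one ha1 k1 (fun u => Ex (piLaw b) (fun y : K2 → U2 => h u (y k2) * h u (y k2)))]
    have h3 := fun u => Ex_pi_one hb1 k2 (fun v => h u v * h u v)
    simp only [h3]
    have : Ex a (fun u => Ex b (fun v => h u v * h u v)) ≤ H * μ := by
      rw [hμ]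
      simp only [Ex, Finset.mul_sum]
      refine Finset.sum_le_sum fun u _ => Finset.sum_le_sum fun v _ => ?_
      have := mul_le_mul_of_nonneg_left (hH u v) (mul_nonneg (mul_nonneg (ha u) (hb v)) (hh u v))
      linarith
    linarith
  · subst e1
    have hne : ((k1, k2) : K1 × K2) ≠ (k1, l2) := by simpa using e2
    simp only [hne, if_false, add_zero]
    rw [Ex_pi_one ha1 k1 (fun u => Ex (piLaw b) (fun y : K2 → U2 => h u (y k2) * h u (y l2)))]
    have h3 := fun u => Ex_pi_two hb1 e2 (fun v v' => h u v * h u v')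
    simp only [h3, Ex_mul_left]
    rw [hμ']
    refine Finset.sum_le_sum fun u _ => ?_
    have e : Ex b (fun v => h u v * Ex b (h u)) = Ex b (h u) * Ex b (h u) := by
      rw [← Ex_mul_left]; simp only [mul_comm]
    change a u * Ex b (fun v => h u v * Ex b (h u)) ≤ a u * ∑ v, b v * h u v
    rw [e, ← mul_assoc]
    exact (mul_le_mul_of_nonneg_right (hca u) (Ex_nonneg hb (hh u)))
  · subst e2
    have hne : ((k1, k2) : K1 × K2) ≠ (l1, k2) := by simpa using e1
    simp only [hne, if_false, add_zero]
    have h3 := fun x : K1 → U1 => Ex_pi_one hb1 k2 (fun v => h (x k1) v * h (x l1) v)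
    simp only [h3]
    rw [Ex_pi_two ha1 e1 (fun u u' => Ex b (fun v => h u v * h u' v))]
    rw [hμ'']
    have e : Ex a (fun u => Ex a (fun u' => Ex b (fun v => h u v * h u' v))) =
        ∑ v, b v * (∑ u, a u * h u v) * (∑ u, a u * h u v) := by
      simp only [Ex, Finset.mul_sum, Finset.sum_mul]
      have : ∀ F : U1 → U1 → U2 → ℝ, ∑ u, ∑ u', ∑ v, F u u' v = ∑ v, ∑ u, ∑ u', F u' u v := by
        intro F
        rw [Finset.sum_comm]
        rw [Finset.sum_comm (s := (Finset.univ : Finset U2))]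
        refine Finset.sum_congr rfl fun u _ => ?_
        rw [Finset.sum_comm]
      rw [this]
      exact Finset.sum_congr rfl fun v _ => Finset.sum_congr rfl fun u _ =>
        Finset.sum_congr rfl fun u' _ => by ring
    rw [e]
    refine Finset.sum_le_sum fun v _ => ?_
    exact mul_le_mul_of_nonneg_right (hcb v)
      (Finset.sum_nonneg fun u _ => mul_nonneg (ha u) (hh u v))

  · have hne : ((k1, k2) : K1 × K2) ≠ (l1, l2) := by simp [e1]
    simp only [hne, if_false, add_zero]
    have h3 := fun x : K1 → U1 => Ex_pi_two hb1 e2 (fun v v' => h (x k1) v * h (x l1) v')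
    simp only [h3]
    rw [Ex_pi_two ha1 e1 (fun u u' => Ex b (fun v => Ex b fun v' => h u v * h u' v'))]
    have hμ1 : μ ≤ 1 := by
      rw [hμ', ← ha1]
      exact Finset.sum_le_sum fun u _ => hca u
    have e : Ex a (fun u => Ex a (fun u' => Ex b (fun v => Ex b fun v' => h u v * h u' v'))) =
        μ * μ := by
      have e1 : ∀ u u', Ex b (fun v => Ex b fun v' => h u v * h u' v') =
          Ex b (h u) * Ex b (h u') := fun u u' => by
        simp only [Ex_mul_left]
        rw [mul_comm, ← Ex_mul_left]; simp only [mul_comm]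
      have e2 : μ = Ex a (fun u => Ex b (h u)) := hμ'
      simp only [e1]
      simp only [Ex_mul_left, ← e2]
      have : Ex a (fun u => Ex b (h u) * μ) = μ * Ex a (fun u => Ex b (h u)) := by
        rw [← Ex_mul_left]; simp only [mul_comm]
      rw [this, ← e2]
    rw [e]
    nlinarith

include ha ha1 hb hb1 hh hH hca hcb in
/-- Mutual covering. With `Z = ∑ h / (|K1| |K2|)` the total selection weight is `min Z 1`, which is at
least `1 - c - (Z - 1)² / (4 * c)`, and `pair_moment` bounds the expectation of `(Z - 1)²` by the
missing mass of `a * b * h` plus `H / (|K1| |K2|)`. -/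
lemma sel_cover [Nonempty K1] [Nonempty K2] {c : ℝ} (hc : 0 < c) (hH0 : 0 ≤ H) :
    1 - c - ((1 - ∑ u, ∑ v, a u * b v * h u v) +
        H / ((Fintype.card K1 : ℝ) * Fintype.card K2)) / (4 * c) ≤
    Ex (piLaw a) (fun x : K1 → U1 => Ex (piLaw b) (fun y : K2 → U2 => ∑ k, sel h x y k)) := by
  set N : ℝ := (Fintype.card K1 : ℝ) * Fintype.card K2 with hN
  have hN0 : 0 < N := by
    have := Fintype.card_pos (α := K1)
    have := Fintype.card_pos (α := K2)
    positivity
  set μ := ∑ u, ∑ v, a u * b v * h u v with hμ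
  have hμ' : μ = ∑ u, a u * ∑ v, b v * h u v := by
    simp only [hμ, Finset.mul_sum, mul_assoc]
  have hμ1 : μ ≤ 1 := by
    rw [hμ', ← ha1]
    exact Finset.sum_le_sum fun u _ => hca u
  -- `min z 1 ≥ 1 - c - (z - 1)² / (4 * c)` at `z = ∑ h / N`, with the square expanded
  have hpt : ∀ (x : K1 → U1) (y : K2 → U2),
      (1 - c - 1 / (4 * c)) + (1 / (2 * c * N)) * ∑ k : K1 × K2, h (x k.1) (y k.2)
        - (1 / (4 * c * N ^ 2)) * ∑ k : K1 × K2, ∑ l : K1 × K2,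
          h (x k.1) (y k.2) * h (x l.1) (y l.2)
        ≤ ∑ k, sel h x y k := fun x y => by
    simp only [sel, ← Finset.sum_div, ← Finset.sum_mul_sum, ← hN]
    set Z := ∑ k : K1 × K2, h (x k.1) (y k.2)
    have e : (1 - c - 1 / (4 * c)) + (1 / (2 * c * N)) * Z - (1 / (4 * c * N ^ 2)) * (Z * Z) =
        1 - c - (Z / N - 1) ^ 2 / (4 * c) := by
      field_simp; ring
    rw [e]
    have hq : 0 ≤ (Z / N - 1) ^ 2 / (4 * c) := by positivity
    rcases le_total N Z with hZ | hZ
    · rw [max_eq_left hZ, div_self (by linarith)]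
      linarith
    · rw [max_eq_right hZ]
      have : 1 - Z / N ≤ c + (Z / N - 1) ^ 2 / (4 * c) := by
        have e2 : c + (Z / N - 1) ^ 2 / (4 * c) - (1 - Z / N) =
            (2 * c - (1 - Z / N)) ^ 2 / (4 * c) := by
          field_simp; ring
        have : 0 ≤ (2 * c - (1 - Z / N)) ^ 2 / (4 * c) := by positivity
        linarith
      linarith
  have hm := Ex_mono (piLaw_nonneg ha) fun x : K1 → U1 => Ex_mono (piLaw_nonneg hb) (hpt x)
  refine le_trans ?_ hm
  have hA1 : ∑ x : K1 → U1, piLaw a x = 1 := piLaw_sum ha1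
  have hB1 : ∑ x : K2 → U2, piLaw b x = 1 := piLaw_sum hb1
  simp only [Ex_sub, Ex_add, Ex_mul_left, Ex_sum, Ex_const hA1, Ex_const hB1]
  have hfirst : ∀ k : K1 × K2, Ex (piLaw a) (fun x : K1 → U1 => Ex (piLaw b)
      (fun y : K2 → U2 => h (x k.1) (y k.2))) = μ := fun k => by
    rw [Ex_pi_one ha1 k.1 (fun u => Ex (piLaw b) (fun y : K2 → U2 => h u (y k.2)))]
    have h3 := fun u => Ex_pi_one hb1 k.2 (fun v => h u v)
    simp only [h3, hμ']
    rfl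
  simp only [hfirst]
  have hsec : ∑ k : K1 × K2, ∑ l : K1 × K2, Ex (piLaw a) (fun x : K1 → U1 => Ex (piLaw b)
      (fun y : K2 → U2 => h (x k.1) (y k.2) * h (x l.1) (y l.2))) ≤ N ^ 2 * μ + N * (H * μ) := by
    refine (Finset.sum_le_sum fun k _ => Finset.sum_le_sum fun l _ =>
      pair_moment ha ha1 hb hb1 hh hH hca hcb k l).trans_eq ?_
    simp only [Finset.sum_add_distrib, Finset.sum_ite_eq, Finset.mem_univ, if_true,
      Finset.sum_const, Finset.card_univ, Fintype.card_prod, nsmul_eq_mul, Nat.cast_mul, ← hN,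
      ← hμ]
    ring
  have hcn : (0:ℝ) ≤ 1 / (4 * c * N ^ 2) := by positivity
  have hsec' := mul_le_mul_of_nonneg_left hsec hcn
  simp only [Finset.sum_const, Finset.card_univ, Fintype.card_prod, nsmul_eq_mul,
    Nat.cast_mul, ← hN]
  have e1 : 1 / (4 * c * N ^ 2) * (N ^ 2 * μ + N * (H * μ)) = (μ + H * μ / N) / (4 * c) := by
    field_simp
  have e2 : 1 / (2 * c * N) * (N * μ) = 2 * μ / (4 * c) := by
    field_simp; ring
  rw [e1] at hsec'
  rw [e2]
  have e3 : H * μ / N ≤ H / N := by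
    gcongr; nlinarith
  have e4 : (μ + H * μ / N) / (4 * c) ≤ (μ + H / N) / (4 * c) := by gcongr
  have e5 : (1 - μ + H / N) / (4 * c) = 1 / (4 * c) - 2 * μ / (4 * c) + (μ + H / N) / (4 * c) := by
    field_simp; ring
  linarith

end Cover
end Prob

/-! ### Tests and smoothings from the information quantities -/

section Tests

lemma trace_mul_cqState {U ι : Type*} [Fintype U] [DecidableEq U] [Fintype ι] [DecidableEq ι]
    (E : Matrix (U × ι) (U × ι) ℂ) (σ : U → Matrix ι ι ℂ) :
    ((E * cqState σ).trace).re =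
      ∑ u, trf (σ u) (E.submatrix (fun i => (u, i)) (fun i => (u, i))) := by
  have : (E * cqState σ).trace =
      ∑ u, (E.submatrix (fun i => (u, i)) (fun i => (u, i)) * σ u).trace := by
    simp only [Matrix.trace, Matrix.diag, Matrix.mul_apply, cqState, Matrix.of_apply,
      Fintype.sum_prod_type, Matrix.submatrix_apply]
    refine Finset.sum_congr rfl fun u _ => Finset.sum_congr rfl fun i _ => ?_
    simp
  rw [this, Complex.re_sum]
  rfl

/-- A near-optimal test, block-diagonal in the classical register. The supremum defining `DH` need not be
attained, so one of the two bits of slack in the rate condition is given up. -/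
lemma exists_test {U ι : Type*} [Fintype U] [DecidableEq U] [Fintype ι] [DecidableEq ι]
    {ε : ℝ} (hε0 : 0 < ε) {σ τ : U → Matrix ι ι ℂ} {M : ℝ} (hM : 0 < M)
    (h : ((Real.logb 2 M : ℝ) : EReal) ≤ DH ε (cqState σ) (cqState τ) - ((2 : ℝ) : EReal)
      - ((Real.logb 2 (1 / ε) : ℝ) : EReal)) :
    ∃ E : U → Matrix ι ι ℂ, (∀ u, 0 ≤ E u) ∧ (∀ u, E u ≤ 1) ∧
      1 - ε ≤ ∑ u, trf (σ u) (E u) ∧ ∑ u, trf (τ u) (E u) ≤ ε / (2 * M) := by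
  have h' : ((Real.logb 2 M + 1 + Real.logb 2 (1 / ε) : ℝ) : EReal) <
      DH ε (cqState σ) (cqState τ) := by
    generalize DH ε (cqState σ) (cqState τ) = a at *
    induction a using EReal.rec with
    | bot => simp [EReal.bot_sub] at h
    | top => exact EReal.coe_lt_top _
    | coe a =>
      norm_cast at h ⊢
      linarith
  rw [DH, lt_sSup_iff] at h'
  obtain ⟨_, ⟨d, ⟨E, hE, hα, hβ⟩, rfl⟩, hd⟩ := h'
  have hd : Real.logb 2 M + 1 + Real.logb 2 (1 / ε) < d := EReal.coe_lt_coe_iff.1 hd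
  rw [trace_mul_cqState] at hα hβ
  refine ⟨_, fun u => (hE.1.submatrix _).nonneg, fun u => ?_, hα, hβ.trans ?_⟩
  · have := hE.2.submatrix (fun i : ι => (u, i))
    rw [Matrix.submatrix_sub, Pi.sub_apply, Pi.sub_apply,
      Matrix.submatrix_one _ (Prod.mk_right_injective u)] at this
    exact this
  · have e : (2 : ℝ) ^ (-(Real.logb 2 M + 1 + Real.logb 2 (1 / ε))) = ε / (2 * M) := by
      rw [Real.rpow_neg (by norm_num), Real.rpow_add (by norm_num), Real.rpow_add (by norm_num),
        Real.rpow_logb (by norm_num) (by norm_num) hM,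
        Real.rpow_logb (by norm_num) (by norm_num) (by positivity)]
      field_simp
      simp
    rw [← e]
    exact Real.rpow_le_rpow_of_exponent_le (by norm_num) (by linarith)

/-- A near-optimal smoothing of `p`, with bound `H = 2 ^ d` on the density. As the infimum defining
`Dmax` is approached only up to an error of one bit, the factor `2` appears in the last bound. -/
lemma exists_smoothing {X : Type*} [Fintype X] {ε : ℝ} (hε0 : 0 < ε) {p Q : X → ℝ}
    (hp : ∑ x, p x = 1) {r1 r2 : ℕ}
    (h : Dmax ε p Q + ((2 * Real.logb 2 (1 / ε) : ℝ) : EReal) ≤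
      (((r1 : ℝ) + (r2 : ℝ) : ℝ) : EReal)) :
    ∃ (P' : X → ℝ) (H : ℝ), (∀ x, 0 ≤ P' x) ∧ (∀ x, P' x ≤ p x) ∧ 1 - ε ≤ ∑ x, P' x ∧
      0 < H ∧ (∀ x, P' x ≤ H * Q x) ∧ H / (2 ^ r1 * 2 ^ r2) ≤ 2 * ε ^ 2 := by
  have h' : Dmax ε p Q < ((r1 + r2 - 2 * Real.logb 2 (1 / ε) + 1 : ℝ) : EReal) := by
    generalize Dmax ε p Q = a at *
    induction a using EReal.rec with
    | bot => exact EReal.bot_lt_coe _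
    | top => rw [EReal.top_add_coe] at h; exact absurd h (not_le.2 (EReal.coe_lt_top _))
    | coe a =>
      norm_cast at h ⊢
      push_cast at h ⊢
      linarith
  rw [Dmax, sInf_lt_iff] at h'
  obtain ⟨_, ⟨d, ⟨P', hP, hl, hQ⟩, rfl⟩, hd⟩ := h'
  have hd : d < r1 + r2 - 2 * Real.logb 2 (1 / ε) + 1 := EReal.coe_lt_coe_iff.1 hd
  refine ⟨P', 2 ^ d, fun x => (hP x).1, fun x => (hP x).2, ?_, by positivity, hQ, ?_⟩
  · have : l1dist p P' = 1 - ∑ x, P' x := by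
      rw [l1dist, ← hp, ← Finset.sum_sub_distrib]
      exact Finset.sum_congr rfl fun x _ => abs_of_nonneg (by linarith [(hP x).2])
    linarith
  · rw [div_le_iff₀ (by positivity)]
    have e : (2 : ℝ) ^ ((r1 : ℝ) + r2 - 2 * Real.logb 2 (1 / ε) + 1) =
        2 * ε ^ 2 * (2 ^ r1 * 2 ^ r2) := by
      rw [Real.rpow_add (by norm_num), Real.rpow_sub (by norm_num), Real.rpow_add (by norm_num),
        mul_comm 2 (Real.logb _ _), Real.rpow_mul (by norm_num),
        Real.rpow_logb (by norm_num) (by norm_num) (by positivity)]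
      simp only [Real.rpow_natCast, Real.rpow_ofNat, Real.rpow_one]
      field_simp
    rw [← e]
    exact Real.rpow_le_rpow_of_exponent_le (by norm_num) hd.le

end Tests

/-! ### Decoding error of one receiver -/

section Receiver
variable {n : Type*} [Fintype n] [DecidableEq n]

/-- Expected decoding error of one receiver over a random codebook `ω`, with selection weights `s`. The
operator bound `hΛ` on the decoder defect is linear, so `H1`, `H2` (correct tests) and `H3`, `H4`
(tests at wrong centres or wrong bins) can be inserted term by term. -/
lemma receiver_bound {Ω I J K κ : Type*} [Fintype Ω] [Fintype I] [Fintype J] [Fintype K]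
    [Fintype κ] [DecidableEq I] [DecidableEq J]
    {q : Ω → ℝ} (hq : ∀ ω, 0 ≤ q ω) (hq1 : ∑ ω, q ω = 1)
    {s : Ω → κ → ℝ} (hs : ∀ ω k, 0 ≤ s ω k) (hs1 : ∀ ω, ∑ k, s ω k ≤ 1)
    {σ : Ω → κ → Matrix n n ℂ} (hσ : ∀ ω k, (σ ω k).PosSemidef) (hσ1 : ∀ ω k, (σ ω k).trace = 1)
    (kk : κ → K) (P Q : Ω → I → J → K → Matrix n n ℂ) (i : I) (j : J) {Λ : Ω → Matrix n n ℂ}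
    {t : ℝ} (ht : 0 < t)
    (hΛ : ∀ ω k, 1 - Λ ω ≤ 4 • ((1 / (1 + t)) • (1 : Matrix n n ℂ) + (1 - Q ω i j k))
      + 4 • (∑ j' ∈ Finset.univ.erase j, t • ∑ k', Q ω i j' k')
      + 6 • ((1 / (1 + t)) • (1 : Matrix n n ℂ) + (1 - P ω i j k))
      + ∑ i' ∈ Finset.univ.erase i, t • ∑ j', ∑ k', P ω i' j' k')
    {ε η1 η3 : ℝ} (hη1 : 0 ≤ η1) (hη3 : 0 ≤ η3)
    (H1 : Ex q (fun ω => ∑ k, s ω k * trf (σ ω k) (1 - P ω i j (kk k))) ≤ ε)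
    (H2 : Ex q (fun ω => ∑ k, s ω k * trf (σ ω k) (1 - Q ω i j (kk k))) ≤ ε)
    (H3 : ∀ i', i' ≠ i → ∀ j' k',
      Ex q (fun ω => ∑ k, s ω k * trf (σ ω k) (P ω i' j' k')) ≤ η1)
    (H4 : ∀ j', j' ≠ j → ∀ k',
      Ex q (fun ω => ∑ k, s ω k * trf (σ ω k) (Q ω i j' k')) ≤ η3) :
    Ex q (fun ω => ∑ k, s ω k * trf (σ ω k) (1 - Λ ω)) ≤
      10 * (1 / (1 + t)) + 10 * ε + 4 * t * (Fintype.card J * Fintype.card K * η3)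
        + t * (Fintype.card I * Fintype.card J * Fintype.card K * η1) := by
  have hpt : ∀ ω, ∑ k, s ω k * trf (σ ω k) (1 - Λ ω) ≤
      10 * (1 / (1 + t)) + (4 * ∑ k, s ω k * trf (σ ω k) (1 - Q ω i j (kk k))
        + (6 * ∑ k, s ω k * trf (σ ω k) (1 - P ω i j (kk k))
        + (4 * t * ∑ j' ∈ Finset.univ.erase j, ∑ k', ∑ k, s ω k * trf (σ ω k) (Q ω i j' k')
        + t * ∑ i' ∈ Finset.univ.erase i, ∑ j', ∑ k', ∑ k,
            s ω k * trf (σ ω k) (P ω i' j' k')))) := fun ω => by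
    have hk : ∀ k, s ω k * trf (σ ω k) (1 - Λ ω) ≤
        10 * (1 / (1 + t)) * s ω k + (4 * (s ω k * trf (σ ω k) (1 - Q ω i j (kk k)))
        + (6 * (s ω k * trf (σ ω k) (1 - P ω i j (kk k)))
        + (4 * t * ∑ j' ∈ Finset.univ.erase j, ∑ k', s ω k * trf (σ ω k) (Q ω i j' k')
        + t * ∑ i' ∈ Finset.univ.erase i, ∑ j', ∑ k',
            s ω k * trf (σ ω k) (P ω i' j' k')))) := fun k => by
      have := mul_le_mul_of_nonneg_left (trf_mono (hσ ω k) (hΛ ω (kk k))) (hs ω k)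
      simp only [map_add, map_nsmul, map_sum, map_smul, trf_one (hσ1 ω k)] at this
      simp only [smul_eq_mul, nsmul_eq_mul, Nat.cast_ofNat] at this
      refine this.trans_eq ?_
      simp only [← Finset.mul_sum]
      ring
    have hlin : ∀ (c t : ℝ) (s b d f g : κ → ℝ),
        ∑ k, (c * s k + (4 * b k + (6 * d k + (4 * t * f k + t * g k)))) =
          c * ∑ k, s k + (4 * ∑ k, b k + (6 * ∑ k, d k + (4 * t * ∑ k, f k + t * ∑ k, g k))) :=
      fun c t s b d f g => by simp only [Finset.sum_add_distrib, Finset.mul_sum]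
    refine (Finset.sum_le_sum fun k _ => hk k).trans ((hlin _ _ _ _ _ _ _).trans_le ?_)
    have e1 : ∑ k, ∑ j' ∈ Finset.univ.erase j, ∑ k', s ω k * trf (σ ω k) (Q ω i j' k') =
        ∑ j' ∈ Finset.univ.erase j, ∑ k', ∑ k, s ω k * trf (σ ω k) (Q ω i j' k') := by
      rw [Finset.sum_comm]
      exact Finset.sum_congr rfl fun _ _ => Finset.sum_comm
    have e2 : ∑ k, ∑ i' ∈ Finset.univ.erase i, ∑ j', ∑ k', s ω k * trf (σ ω k) (P ω i' j' k') =
        ∑ i' ∈ Finset.univ.erase i, ∑ j', ∑ k', ∑ k, s ω k * trf (σ ω k) (P ω i' j' k') := by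
      rw [Finset.sum_comm]
      refine Finset.sum_congr rfl fun _ _ => ?_
      rw [Finset.sum_comm]
      exact Finset.sum_congr rfl fun _ _ => Finset.sum_comm
    rw [e1, e2]
    have := mul_le_mul_of_nonneg_left (hs1 ω) (show 0 ≤ 10 * (1 / (1 + t)) by positivity)
    linarith
  refine (Ex_mono hq hpt).trans ?_
  simp only [Ex_add, Ex_mul_left, Ex_sum, Ex_const hq1]
  have hQ : ∑ j' ∈ Finset.univ.erase j, ∑ k' : K,
      Ex q (fun ω => ∑ k, s ω k * trf (σ ω k) (Q ω i j' k')) ≤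
      Fintype.card J * Fintype.card K * η3 := by
    calc _ ≤ ∑ j' ∈ Finset.univ.erase j, ∑ k' : K, η3 :=
          Finset.sum_le_sum fun j' hj => Finset.sum_le_sum fun k' _ =>
            H4 j' (Finset.ne_of_mem_erase hj) k'
      _ ≤ ∑ j' : J, ∑ k' : K, η3 :=
          Finset.sum_le_sum_of_subset_of_nonneg (Finset.erase_subset _ _) fun _ _ _ =>
            Finset.sum_nonneg fun _ _ => hη3
      _ = _ := by simp [mul_assoc]
  have hP : ∑ i' ∈ Finset.univ.erase i, ∑ j' : J, ∑ k' : K,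
      Ex q (fun ω => ∑ k, s ω k * trf (σ ω k) (P ω i' j' k')) ≤
      Fintype.card I * Fintype.card J * Fintype.card K * η1 := by
    calc _ ≤ ∑ i' ∈ Finset.univ.erase i, ∑ j' : J, ∑ k' : K, η1 :=
          Finset.sum_le_sum fun i' hi => Finset.sum_le_sum fun j' _ =>
            Finset.sum_le_sum fun k' _ => H3 i' (Finset.ne_of_mem_erase hi) j' k'
      _ ≤ ∑ i' : I, ∑ j' : J, ∑ k' : K, η1 :=
          Finset.sum_le_sum_of_subset_of_nonneg (Finset.erase_subset _ _) fun _ _ _ =>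
            Finset.sum_nonneg fun _ _ => Finset.sum_nonneg fun _ _ => hη1
      _ = _ := by simp [mul_assoc]
  simp only [Ex_sum] at H1 H2 hQ hP
  have := mul_le_mul_of_nonneg_left hQ ht.le
  have := mul_le_mul_of_nonneg_left hP ht.le
  linarith

end Receiver

/-! ### The random superposition codebook -/

section Codebook
variable {U0 U1 U2 I J1 J2 K1 K2 : Type*} [Fintype U0] [Fintype U1] [Fintype U2]
  [Fintype I] [Fintype J1] [Fintype J2] [Fintype K1] [Fintype K2]
  [DecidableEq I] [DecidableEq J1] [DecidableEq J2] [DecidableEq K1] [DecidableEq K2]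

/-- The part of the codebook attached to one common message: a cloud centre in `U0`, and satellites
in `U1` and `U2` indexed by a bin (`J1`, `J2`) and a position in the bin (`K1`, `K2`). -/
abbrev Block (U0 U1 U2 J1 J2 K1 K2 : Type*) := U0 × (J1 → K1 → U1) × (J2 → K2 → U2)

/-- The law of a random block: the centre has law `P0`, and given the centre `u0` all satellites are
independent, with laws `a u0` and `b u0`. -/
def blockLaw (P0 : U0 → ℝ) (a : U0 → U1 → ℝ) (b : U0 → U2 → ℝ)
    (B : Block U0 U1 U2 J1 J2 K1 K2) : ℝ :=
  P0 B.1 * (piLaw (piLaw (a B.1)) B.2.1 * piLaw (piLaw (b B.1)) B.2.2)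

/-- The input triple given by the centre and the satellites at positions `k` of the bins `j1`, `j2`. -/
def word (B : Block U0 U1 U2 J1 J2 K1 K2) (j1 : J1) (j2 : J2) (k : K1 × K2) : U0 × U1 × U2 :=
  (B.1, B.2.1 j1 k.1, B.2.2 j2 k.2)

/-- The probability of selecting the positions `k` when the private messages are `j1`, `j2`. -/
def weight (h : U0 → U1 → U2 → ℝ) (B : Block U0 U1 U2 J1 J2 K1 K2) (j1 : J1) (j2 : J2)
    (k : K1 × K2) : ℝ :=
  sel (h B.1) (B.2.1 j1) (B.2.2 j2) k

lemma Ex_block (P0 : U0 → ℝ) (a : U0 → U1 → ℝ) (b : U0 → U2 → ℝ)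
    (F : Block U0 U1 U2 J1 J2 K1 K2 → ℝ) :
    Ex (blockLaw P0 a b) F = Ex P0 fun u0 => Ex (piLaw (piLaw (a u0))) fun v =>
      Ex (piLaw (piLaw (b u0))) fun w => F (u0, v, w) := by
  simp only [Ex, blockLaw, Fintype.sum_prod_type, Finset.mul_sum]
  exact Finset.sum_congr rfl fun _ _ => Finset.sum_congr rfl fun _ _ =>
    Finset.sum_congr rfl fun _ _ => by ring

variable {P0 : U0 → ℝ} {a : U0 → U1 → ℝ} {b : U0 → U2 → ℝ} {h : U0 → U1 → U2 → ℝ}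
  {p : U0 × U1 × U2 → ℝ}
  (hP : ∀ u, 0 ≤ P0 u) (hP1 : ∑ u, P0 u = 1)
  (ha : ∀ u0 u, 0 ≤ a u0 u) (ha1 : ∀ u0, ∑ u, a u0 u = 1)
  (hb : ∀ u0 u, 0 ≤ b u0 u) (hb1 : ∀ u0, ∑ u, b u0 u = 1)
  (hh : ∀ u0 u v, 0 ≤ h u0 u v)

omit [Fintype U0] [Fintype U1] [Fintype U2] [DecidableEq J1] [DecidableEq J2] [DecidableEq K1]
  [DecidableEq K2] in
include hP ha hb in
lemma blockLaw_nonneg (B : Block U0 U1 U2 J1 J2 K1 K2) : 0 ≤ blockLaw P0 a b B :=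
  mul_nonneg (hP _) (mul_nonneg (piLaw_nonneg (piLaw_nonneg (ha _)) _)
    (piLaw_nonneg (piLaw_nonneg (hb _)) _))

include hP1 ha1 hb1 in
lemma blockLaw_sum : ∑ B : Block U0 U1 U2 J1 J2 K1 K2, blockLaw P0 a b B = 1 := by
  have := Ex_block (J1 := J1) (J2 := J2) (K1 := K1) (K2 := K2) P0 a b (fun _ => 1)
  have hv := fun u0 => piLaw_sum (ι := J1) (piLaw_sum (ι := K1) (ha1 u0))
  have hw := fun u0 => piLaw_sum (ι := J2) (piLaw_sum (ι := K2) (hb1 u0))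
  simp only [Ex_const (hv _), Ex_const (hw _), Ex_const hP1] at this
  simpa [Ex] using this

include hb1 ha1 in
lemma Ex_block_left (g : U0 → U1 → ℝ) (j : J1) (k : K1) :
    Ex (blockLaw P0 a b) (fun B : Block U0 U1 U2 J1 J2 K1 K2 => g B.1 (B.2.1 j k)) =
      ∑ u0, ∑ u1, P0 u0 * a u0 u1 * g u0 u1 := by
  rw [Ex_block]
  have hw := fun u0 => piLaw_sum (ι := J2) (piLaw_sum (ι := K2) (hb1 u0))
  simp only [Ex_const (hw _)]
  have h1 : ∀ u0, Ex (piLaw (piLaw (a u0))) (fun v : J1 → K1 → U1 => g u0 (v j k)) =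
      Ex (a u0) (g u0) := fun u0 => by
    rw [Ex_pi_one (piLaw_sum (ha1 u0)) j (fun x => g u0 (x k)), Ex_pi_one (ha1 u0) k]
  simp only [h1]
  simp only [Ex, Finset.mul_sum, mul_assoc]

include hb1 ha1 in
lemma Ex_block_right (g : U0 → U2 → ℝ) (j : J2) (k : K2) :
    Ex (blockLaw P0 a b) (fun B : Block U0 U1 U2 J1 J2 K1 K2 => g B.1 (B.2.2 j k)) =
      ∑ u0, ∑ u2, P0 u0 * b u0 u2 * g u0 u2 := by
  rw [Ex_block]
  have hv := fun u0 => piLaw_sum (ι := J1) (piLaw_sum (ι := K1) (ha1 u0))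
  have h1 : ∀ u0, Ex (piLaw (piLaw (b u0))) (fun v : J2 → K2 → U2 => g u0 (v j k)) =
      Ex (b u0) (g u0) := fun u0 => by
    rw [Ex_pi_one (piLaw_sum (hb1 u0)) j (fun x => g u0 (x k)), Ex_pi_one (hb1 u0) k]
  simp only [h1, Ex_const (hv _)]
  simp only [Ex, Finset.mul_sum, mul_assoc]

variable [Nonempty K1] [Nonempty K2]
  (hdom : ∀ u0 u1 u2, P0 u0 * a u0 u1 * b u0 u2 * h u0 u1 u2 ≤ p (u0, u1, u2))

include hP ha ha1 hb hb1 hh hdom in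
/-- The transmitted triple has a law dominated by `p`. -/
lemma Ex_block_word (j1 : J1) (j2 : J2) (φ : U0 × U1 × U2 → ℝ) (hφ : ∀ u, 0 ≤ φ u) :
    Ex (blockLaw P0 a b) (fun B : Block U0 U1 U2 J1 J2 K1 K2 =>
      ∑ k, weight h B j1 j2 k * φ (word B j1 j2 k)) ≤ ∑ u, p u * φ u := by
  rw [Ex_block, Fintype.sum_prod_type]
  refine Finset.sum_le_sum fun u0 _ => ?_
  simp only [weight, word]
  rw [Ex_pi_one (piLaw_sum (ha1 u0)) j1 (fun x => Ex (piLaw (piLaw (b u0)))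
    fun w : J2 → K2 → U2 => ∑ k, sel (h u0) x (w j2) k * φ (u0, x k.1, w j2 k.2))]
  have e := fun x : K1 → U1 => Ex_pi_one (piLaw_sum (hb1 u0)) j2
    (fun y : K2 → U2 => ∑ k, sel (h u0) x y k * φ (u0, x k.1, y k.2))
  simp only [e]
  refine (mul_le_mul_of_nonneg_left (sel_dom (ha u0) (ha1 u0) (hb u0) (hb1 u0) (hh u0)
    (fun u v => φ (u0, u, v)) fun _ _ => hφ _) (hP u0)).trans ?_
  rw [Fintype.sum_prod_type, Finset.mul_sum]
  refine Finset.sum_le_sum fun u1 _ => ?_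
  rw [Finset.mul_sum]
  refine Finset.sum_le_sum fun u2 _ => ?_
  have := mul_le_mul_of_nonneg_right (hdom u0 u1 u2) (hφ (u0, u1, u2))
  linarith

include hP ha ha1 hb hb1 hh hdom in
/-- Given the centre, a satellite from another bin is independent of the transmitted triple, whose law
is dominated by `p`. -/
lemma Ex_block_other_left {j1 j' : J1} (hj : j' ≠ j1) (j2 : J2) (k' : K1)
    (φ : U0 × U1 × U2 → U1 → ℝ) (hφ : ∀ u u', 0 ≤ φ u u') :
    Ex (blockLaw P0 a b) (fun B : Block U0 U1 U2 J1 J2 K1 K2 =>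
      ∑ k, weight h B j1 j2 k * φ (word B j1 j2 k) (B.2.1 j' k')) ≤
      ∑ u0, ∑ u', a u0 u' * ∑ u1, ∑ u2, p (u0, u1, u2) * φ (u0, u1, u2) u' := by
  classical
  rw [Ex_block]
  refine Finset.sum_le_sum fun u0 _ => ?_
  simp only [weight, word]
  rw [Ex_pi_two (piLaw_sum (ha1 u0)) hj (fun x' x => Ex (piLaw (piLaw (b u0)))
    fun w : J2 → K2 → U2 => ∑ k, sel (h u0) x (w j2) k * φ (u0, x k.1, w j2 k.2) (x' k'))]
  have e := fun x' x : K1 → U1 => Ex_pi_one (piLaw_sum (hb1 u0)) j2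
    (fun y : K2 → U2 => ∑ k, sel (h u0) x y k * φ (u0, x k.1, y k.2) (x' k'))
  simp only [e]
  refine (mul_le_mul_of_nonneg_left (Ex_mono (piLaw_nonneg (ha u0)) fun x' : K1 → U1 =>
    sel_dom (K1 := K1) (K2 := K2) (ha u0) (ha1 u0) (hb u0) (hb1 u0) (hh u0)
    (fun u v => φ (u0, u, v) (x' k')) fun _ _ => hφ _ _) (hP u0)).trans ?_
  rw [Ex_pi_one (ha1 u0) k' (fun u' => ∑ u, ∑ v, a u0 u * b u0 v * h u0 u v * φ (u0, u, v) u'),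
    Ex, Finset.mul_sum]
  refine Finset.sum_le_sum fun u' _ => ?_
  rw [mul_left_comm]
  refine mul_le_mul_of_nonneg_left ?_ (ha u0 u')
  rw [Finset.mul_sum]
  refine Finset.sum_le_sum fun u1 _ => ?_
  rw [Finset.mul_sum]
  refine Finset.sum_le_sum fun u2 _ => ?_
  have := mul_le_mul_of_nonneg_right (hdom u0 u1 u2) (hφ (u0, u1, u2) u')
  linarith

include hP ha ha1 hb hb1 hh hdom in
lemma Ex_block_other_right (j1 : J1) {j2 j' : J2} (hj : j' ≠ j2) (k' : K2)
    (φ : U0 × U1 × U2 → U2 → ℝ) (hφ : ∀ u u', 0 ≤ φ u u') :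
    Ex (blockLaw P0 a b) (fun B : Block U0 U1 U2 J1 J2 K1 K2 =>
      ∑ k, weight h B j1 j2 k * φ (word B j1 j2 k) (B.2.2 j' k')) ≤
      ∑ u0, ∑ u', b u0 u' * ∑ u1, ∑ u2, p (u0, u1, u2) * φ (u0, u1, u2) u' := by
  classical
  rw [Ex_block]
  refine Finset.sum_le_sum fun u0 _ => ?_
  simp only [weight, word]
  rw [Ex_pi_one (piLaw_sum (ha1 u0)) j1 (fun x => Ex (piLaw (piLaw (b u0)))
    fun w : J2 → K2 → U2 => ∑ k, sel (h u0) x (w j2) k * φ (u0, x k.1, w j2 k.2) (w j' k'))]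
  have e := fun x : K1 → U1 => Ex_pi_two (piLaw_sum (hb1 u0)) hj
    (fun y' y : K2 → U2 => ∑ k, sel (h u0) x y k * φ (u0, x k.1, y k.2) (y' k'))
  simp only [e]
  have hcomm : ∀ F : (K1 → U1) → (K2 → U2) → ℝ,
      Ex (piLaw (a u0)) (fun x => Ex (piLaw (b u0)) (F x)) =
        Ex (piLaw (b u0)) (fun y => Ex (piLaw (a u0)) (fun x => F x y)) := fun F => by
    simp only [Ex, Finset.mul_sum]
    rw [Finset.sum_comm]
    exact Finset.sum_congr rfl fun _ _ => Finset.sum_congr rfl fun _ _ => by ring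
  rw [hcomm]
  refine (mul_le_mul_of_nonneg_left (Ex_mono (piLaw_nonneg (hb u0)) fun y' : K2 → U2 =>
    sel_dom (K1 := K1) (K2 := K2) (ha u0) (ha1 u0) (hb u0) (hb1 u0) (hh u0)
    (fun u v => φ (u0, u, v) (y' k')) fun _ _ => hφ _ _) (hP u0)).trans ?_
  rw [Ex_pi_one (hb1 u0) k' (fun u' => ∑ u, ∑ v, a u0 u * b u0 v * h u0 u v * φ (u0, u, v) u'),
    Ex, Finset.mul_sum]
  refine Finset.sum_le_sum fun u' _ => ?_
  rw [mul_left_comm]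
  refine mul_le_mul_of_nonneg_left ?_ (hb u0 u')
  rw [Finset.mul_sum]
  refine Finset.sum_le_sum fun u1 _ => ?_
  rw [Finset.mul_sum]
  refine Finset.sum_le_sum fun u2 _ => ?_
  have := mul_le_mul_of_nonneg_right (hdom u0 u1 u2) (hφ (u0, u1, u2) u')
  linarith

include hP hP1 ha ha1 hb hb1 hh hdom in
/-- The block of another common message is independent of the transmitted triple, whose law is dominated
by `p`. -/
lemma Ex_code_other {i i' : I} (hi : i' ≠ i) (j1 : J1) (j2 : J2)
    (φ : U0 × U1 × U2 → Block U0 U1 U2 J1 J2 K1 K2 → ℝ) (hφ : ∀ u B, 0 ≤ φ u B) :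
    Ex (piLaw (blockLaw P0 a b)) (fun C : I → Block U0 U1 U2 J1 J2 K1 K2 =>
      ∑ k, weight h (C i) j1 j2 k * φ (word (C i) j1 j2 k) (C i')) ≤
      Ex (blockLaw P0 a b) (fun B => ∑ u, p u * φ u B) := by
  classical
  rw [Ex_pi_two (blockLaw_sum hP1 ha1 hb1) hi (fun B' B =>
    ∑ k, weight h B j1 j2 k * φ (word B j1 j2 k) B')]
  exact Ex_mono (blockLaw_nonneg hP ha hb) fun B' =>
    Ex_block_word hP ha ha1 hb hb1 hh hdom j1 j2 (fun u => φ u B') fun u => hφ u B'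

include hP hP1 ha ha1 hb hb1 hh in
/-- The covering bound `sel_cover` averaged over the centre. Centres of probability zero do not
contribute, so the conditions `hca`, `hcb` are needed only where `P0` is positive. -/
lemma Ex_block_cover {H c : ℝ} (hH : ∀ u0 u v, h u0 u v ≤ H)
    (hca : ∀ u0, 0 < P0 u0 → ∀ u, a u0 u * ∑ v, b u0 v * h u0 u v ≤ a u0 u)
    (hcb : ∀ u0, 0 < P0 u0 → ∀ v, b u0 v * ∑ u, a u0 u * h u0 u v ≤ b u0 v)
    (hc : 0 < c) (hH0 : 0 ≤ H) (j1 : J1) (j2 : J2) :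
    1 - c - ((1 - ∑ u0, ∑ u1, ∑ u2, P0 u0 * a u0 u1 * b u0 u2 * h u0 u1 u2) +
        H / ((Fintype.card K1 : ℝ) * Fintype.card K2)) / (4 * c) ≤
    Ex (blockLaw P0 a b) (fun B : Block U0 U1 U2 J1 J2 K1 K2 => ∑ k, weight h B j1 j2 k) := by
  classical
  set D := H / ((Fintype.card K1 : ℝ) * Fintype.card K2) with hD
  have e : Ex P0 (fun u0 => (1 - c - 1 / (4 * c) - D / (4 * c)) +
      1 / (4 * c) * ∑ u1, ∑ u2, a u0 u1 * b u0 u2 * h u0 u1 u2) =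
      1 - c - ((1 - ∑ u0, ∑ u1, ∑ u2, P0 u0 * a u0 u1 * b u0 u2 * h u0 u1 u2) + D) / (4 * c) := by
    rw [Ex_add, Ex_const hP1, Ex_mul_left]
    have : Ex P0 (fun u0 => ∑ u1, ∑ u2, a u0 u1 * b u0 u2 * h u0 u1 u2) =
        ∑ u0, ∑ u1, ∑ u2, P0 u0 * a u0 u1 * b u0 u2 * h u0 u1 u2 := by
      simp only [Ex, Finset.mul_sum, mul_assoc]
    rw [this]
    field_simp
    ring
  rw [← e, Ex_block]
  refine Finset.sum_le_sum fun u0 _ => ?_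
  rcases (hP u0).eq_or_lt with h0 | h0
  · simp [← h0]
  refine mul_le_mul_of_nonneg_left ?_ h0.le
  simp only [weight]
  rw [Ex_pi_one (piLaw_sum (ha1 u0)) j1 (fun x => Ex (piLaw (piLaw (b u0)))
    fun w : J2 → K2 → U2 => ∑ k, sel (h u0) x (w j2) k)]
  have e2 := fun x : K1 → U1 => Ex_pi_one (piLaw_sum (hb1 u0)) j2
    (fun y : K2 → U2 => ∑ k, sel (h u0) x y k)
  simp only [e2]
  refine le_trans (le_of_eq ?_) (sel_cover (K1 := K1) (K2 := K2) (ha u0) (ha1 u0) (hb u0) (hb1 u0)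
    (hh u0) (hH u0) (hca u0 h0) (hcb u0 h0) hc hH0)
  rw [← hD]
  field_simp
  ring

include hP hP1 ha ha1 hb hb1 hh hdom in
/-- The decoder of the first receiver, for each codebook, together with its expected error for each
message triple. `E` tests centre and satellite jointly, `F` tests the satellite given the
centre; `η1`, `η3` bound their type II errors. -/
lemma receiver_left {n : Type*} [Fintype n] [DecidableEq n]
    {σ : U0 × U1 × U2 → Matrix n n ℂ} (hσ : ∀ u, (σ u).PosSemidef) (hσ1 : ∀ u, (σ u).trace = 1)
    {E F : U0 × U1 → Matrix n n ℂ} (hE0 : ∀ v, 0 ≤ E v) (hE1 : ∀ v, E v ≤ 1)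
    (hF0 : ∀ v, 0 ≤ F v) (hF1 : ∀ v, F v ≤ 1) {ε η1 η3 t : ℝ} (ht : 0 < t)
    (hη1 : 0 ≤ η1) (hη3 : 0 ≤ η3)
    (hE : ∑ u, p u * trf (σ u) (1 - E (u.1, u.2.1)) ≤ ε)
    (hF : ∑ u, p u * trf (σ u) (1 - F (u.1, u.2.1)) ≤ ε)
    (hE' : ∑ u0, ∑ u1, P0 u0 * a u0 u1 * ∑ u, p u * trf (σ u) (E (u0, u1)) ≤ η1)
    (hF' : ∑ u0, ∑ u', a u0 u' * ∑ u1, ∑ u2,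
      p (u0, u1, u2) * trf (σ (u0, u1, u2)) (F (u0, u')) ≤ η3) :
    ∃ Λ : (I → Block U0 U1 U2 J1 J2 K1 K2) → I × J1 → Matrix n n ℂ,
      (∀ C m, 0 ≤ Λ C m) ∧ (∀ C, ∑ m, Λ C m ≤ 1) ∧ ∀ i j1 j2,
        Ex (piLaw (blockLaw P0 a b)) (fun C : I → Block U0 U1 U2 J1 J2 K1 K2 =>
          ∑ k, weight h (C i) j1 j2 k * trf (σ (word (C i) j1 j2 k)) (1 - Λ C (i, j1))) ≤
        10 * (1 / (1 + t)) + 10 * ε + 4 * t * (Fintype.card J1 * Fintype.card K1 * η3)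
          + t * (Fintype.card I * Fintype.card J1 * Fintype.card K1 * η1) := by
  choose Λ hΛ0 hΛ1 hΛ using fun C : I → Block U0 U1 U2 J1 J2 K1 K2 =>
    exists_measurement (fun i j k => E ((C i).1, (C i).2.1 j k))
      (fun i j k => F ((C i).1, (C i).2.1 j k)) (fun _ _ _ => hE0 _) (fun _ _ _ => hE1 _)
      (fun _ _ _ => hF0 _) (fun _ _ _ => hF1 _) ht
  refine ⟨Λ, hΛ0, hΛ1, fun i j1 j2 => ?_⟩
  have hB1 := blockLaw_sum (J1 := J1) (J2 := J2) (K1 := K1) (K2 := K2) hP1 ha1 hb1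
  have hB0 := blockLaw_nonneg (J1 := J1) (J2 := J2) (K1 := K1) (K2 := K2) hP ha hb
  refine receiver_bound (I := I) (J := J1) (K := K1)
    (s := fun C k => weight h (C i) j1 j2 k) (σ := fun C k => σ (word (C i) j1 j2 k))
    (Λ := fun C => Λ C (i, j1)) (piLaw_nonneg hB0) (piLaw_sum hB1)
    (fun C k => sel_nonneg (hh _) _ _ k) (fun C => sel_sum_le _ _)
    (fun C k => hσ _) (fun C k => hσ1 _) Prod.fst
    (fun C i j k => E ((C i).1, (C i).2.1 j k)) (fun C i j k => F ((C i).1, (C i).2.1 j k))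
    i j1 ht (fun C k => hΛ C i j1 k) hη1 hη3 ?_ ?_ ?_ ?_
  · rw [Ex_pi_one hB1 i (fun B => ∑ k, weight h B j1 j2 k *
      trf (σ (word B j1 j2 k)) (1 - E (B.1, B.2.1 j1 k.1)))]
    exact (Ex_block_word hP ha ha1 hb hb1 hh hdom j1 j2
      (fun u => trf (σ u) (1 - E (u.1, u.2.1)))
      fun u => trf_nonneg (hσ u) (sub_nonneg.2 (hE1 _))).trans hE
  · rw [Ex_pi_one hB1 i (fun B => ∑ k, weight h B j1 j2 k *
      trf (σ (word B j1 j2 k)) (1 - F (B.1, B.2.1 j1 k.1)))]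
    exact (Ex_block_word hP ha ha1 hb hb1 hh hdom j1 j2
      (fun u => trf (σ u) (1 - F (u.1, u.2.1)))
      fun u => trf_nonneg (hσ u) (sub_nonneg.2 (hF1 _))).trans hF
  · intro i' hi j' k'
    refine (Ex_code_other hP hP1 ha ha1 hb hb1 hh hdom hi j1 j2
      (fun u B => trf (σ u) (E (B.1, B.2.1 j' k')))
      fun u B => trf_nonneg (hσ u) (hE0 _)).trans ?_
    rw [Ex_block_left ha1 hb1 (fun u0 u1 => ∑ u, p u * trf (σ u) (E (u0, u1))) j' k']
    exact hE'
  · intro j' hj k'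
    rw [Ex_pi_one hB1 i (fun B => ∑ k, weight h B j1 j2 k *
      trf (σ (word B j1 j2 k)) (F (B.1, B.2.1 j' k')))]
    exact (Ex_block_other_left hP ha ha1 hb hb1 hh hdom hj j2 k'
      (fun u u' => trf (σ u) (F (u.1, u')))
      fun u u' => trf_nonneg (hσ u) (hF0 _)).trans hF'

include hP hP1 ha ha1 hb hb1 hh hdom in
/-- The counterpart of `receiver_left` for the second receiver, who decodes the bin in `U2`. -/
lemma receiver_right {n : Type*} [Fintype n] [DecidableEq n]
    {σ : U0 × U1 × U2 → Matrix n n ℂ} (hσ : ∀ u, (σ u).PosSemidef) (hσ1 : ∀ u, (σ u).trace = 1)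
    {E F : U0 × U2 → Matrix n n ℂ} (hE0 : ∀ v, 0 ≤ E v) (hE1 : ∀ v, E v ≤ 1)
    (hF0 : ∀ v, 0 ≤ F v) (hF1 : ∀ v, F v ≤ 1) {ε η1 η3 t : ℝ} (ht : 0 < t)
    (hη1 : 0 ≤ η1) (hη3 : 0 ≤ η3)
    (hE : ∑ u, p u * trf (σ u) (1 - E (u.1, u.2.2)) ≤ ε)
    (hF : ∑ u, p u * trf (σ u) (1 - F (u.1, u.2.2)) ≤ ε)
    (hE' : ∑ u0, ∑ u2, P0 u0 * b u0 u2 * ∑ u, p u * trf (σ u) (E (u0, u2)) ≤ η1)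
    (hF' : ∑ u0, ∑ u', b u0 u' * ∑ u1, ∑ u2,
      p (u0, u1, u2) * trf (σ (u0, u1, u2)) (F (u0, u')) ≤ η3) :
    ∃ Λ : (I → Block U0 U1 U2 J1 J2 K1 K2) → I × J2 → Matrix n n ℂ,
      (∀ C m, 0 ≤ Λ C m) ∧ (∀ C, ∑ m, Λ C m ≤ 1) ∧ ∀ i j1 j2,
        Ex (piLaw (blockLaw P0 a b)) (fun C : I → Block U0 U1 U2 J1 J2 K1 K2 =>
          ∑ k, weight h (C i) j1 j2 k * trf (σ (word (C i) j1 j2 k)) (1 - Λ C (i, j2))) ≤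
        10 * (1 / (1 + t)) + 10 * ε + 4 * t * (Fintype.card J2 * Fintype.card K2 * η3)
          + t * (Fintype.card I * Fintype.card J2 * Fintype.card K2 * η1) := by
  choose Λ hΛ0 hΛ1 hΛ using fun C : I → Block U0 U1 U2 J1 J2 K1 K2 =>
    exists_measurement (fun i j k => E ((C i).1, (C i).2.2 j k))
      (fun i j k => F ((C i).1, (C i).2.2 j k)) (fun _ _ _ => hE0 _) (fun _ _ _ => hE1 _)
      (fun _ _ _ => hF0 _) (fun _ _ _ => hF1 _) ht
  refine ⟨Λ, hΛ0, hΛ1, fun i j1 j2 => ?_⟩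
  have hB1 := blockLaw_sum (J1 := J1) (J2 := J2) (K1 := K1) (K2 := K2) hP1 ha1 hb1
  have hB0 := blockLaw_nonneg (J1 := J1) (J2 := J2) (K1 := K1) (K2 := K2) hP ha hb
  refine receiver_bound (I := I) (J := J2) (K := K2)
    (s := fun C k => weight h (C i) j1 j2 k) (σ := fun C k => σ (word (C i) j1 j2 k))
    (Λ := fun C => Λ C (i, j2)) (piLaw_nonneg hB0) (piLaw_sum hB1)
    (fun C k => sel_nonneg (hh _) _ _ k) (fun C => sel_sum_le _ _)
    (fun C k => hσ _) (fun C k => hσ1 _) Prod.snd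
    (fun C i j k => E ((C i).1, (C i).2.2 j k)) (fun C i j k => F ((C i).1, (C i).2.2 j k))
    i j2 ht (fun C k => hΛ C i j2 k) hη1 hη3 ?_ ?_ ?_ ?_
  · rw [Ex_pi_one hB1 i (fun B => ∑ k, weight h B j1 j2 k *
      trf (σ (word B j1 j2 k)) (1 - E (B.1, B.2.2 j2 k.2)))]
    exact (Ex_block_word hP ha ha1 hb hb1 hh hdom j1 j2
      (fun u => trf (σ u) (1 - E (u.1, u.2.2)))
      fun u => trf_nonneg (hσ u) (sub_nonneg.2 (hE1 _))).trans hE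
  · rw [Ex_pi_one hB1 i (fun B => ∑ k, weight h B j1 j2 k *
      trf (σ (word B j1 j2 k)) (1 - F (B.1, B.2.2 j2 k.2)))]
    exact (Ex_block_word hP ha ha1 hb hb1 hh hdom j1 j2
      (fun u => trf (σ u) (1 - F (u.1, u.2.2)))
      fun u => trf_nonneg (hσ u) (sub_nonneg.2 (hF1 _))).trans hF
  · intro i' hi j' k'
    refine (Ex_code_other hP hP1 ha ha1 hb hb1 hh hdom hi j1 j2
      (fun u B => trf (σ u) (E (B.1, B.2.2 j' k')))
      fun u B => trf_nonneg (hσ u) (hE0 _)).trans ?_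
    rw [Ex_block_right ha1 hb1 (fun u0 u1 => ∑ u, p u * trf (σ u) (E (u0, u1))) j' k']
    exact hE'
  · intro j' hj k'
    rw [Ex_pi_one hB1 i (fun B => ∑ k, weight h B j1 j2 k *
      trf (σ (word B j1 j2 k)) (F (B.1, B.2.2 j' k')))]
    exact (Ex_block_other_right hP ha ha1 hb hb1 hh hdom j1 hj k'
      (fun u u' => trf (σ u) (F (u.1, u')))
      fun u u' => trf_nonneg (hσ u) (hF0 _)).trans hF'

end Codebook

/-! ### Conditional factorisation of the input law -/

section Decomp

/-- A smoothed law `P'` that is at most `H` times the conditional product law factors as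
`P0 * a * b * h` with `0 ≤ h ≤ H`, where `P0` is the law of `U0` and `a`, `b` are the conditional
laws of `U1`, `U2`. Where `P0` vanishes, the unconditional marginals serve as `a` and `b`, so that
they are probability laws everywhere. -/
lemma exists_decomposition {U0 U1 U2 : Type*} [Fintype U0] [Fintype U1] [Fintype U2]
    {p P' : U0 × U1 × U2 → ℝ} (hp : IsProbDist p) (hP'0 : ∀ u, 0 ≤ P' u)
    {H : ℝ} (hH : 0 < H)
    (hP'H : ∀ u, P' u ≤ H * ((∑ b, p (u.1, u.2.1, b)) * (∑ a, p (u.1, a, u.2.2)) /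
      (∑ a, ∑ b, p (u.1, a, b)))) :
    ∃ (P0 : U0 → ℝ) (a : U0 → U1 → ℝ) (b : U0 → U2 → ℝ) (h : U0 → U1 → U2 → ℝ),
      (∀ u, P0 u = ∑ x, ∑ y, p (u, x, y)) ∧
      (∀ u x, 0 ≤ a u x) ∧ (∀ u, ∑ x, a u x = 1) ∧ (∀ u y, 0 ≤ b u y) ∧ (∀ u, ∑ y, b u y = 1) ∧
      (∀ u, P0 u ≠ 0 → ∀ x, a u x = (∑ y, p (u, x, y)) / P0 u) ∧
      (∀ u, P0 u ≠ 0 → ∀ y, b u y = (∑ x, p (u, x, y)) / P0 u) ∧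
      (∀ u x y, 0 ≤ h u x y) ∧ (∀ u x y, h u x y ≤ H) ∧
      (∀ u x y, P0 u * a u x * b u y * h u x y = P' (u, x, y)) := by
  classical
  set P0 : U0 → ℝ := fun u => ∑ x, ∑ y, p (u, x, y) with hP0
  set A : U0 → U1 → ℝ := fun u x => ∑ y, p (u, x, y) with hA
  set B : U0 → U2 → ℝ := fun u y => ∑ x, p (u, x, y) with hB
  have hA0 : ∀ u x, 0 ≤ A u x := fun u x => Finset.sum_nonneg fun _ _ => hp.1 _
  have hB0 : ∀ u x, 0 ≤ B u x := fun u x => Finset.sum_nonneg fun _ _ => hp.1 _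
  have hP00 : ∀ u, 0 ≤ P0 u := fun u => Finset.sum_nonneg fun _ _ => hA0 _ _
  have hAs : ∀ u, ∑ x, A u x = P0 u := fun u => rfl
  have hBs : ∀ u, ∑ y, B u y = P0 u := fun u => Finset.sum_comm
  have hP1 : ∑ u, P0 u = 1 := by
    rw [← hp.2, Fintype.sum_prod_type]
    simp only [Fintype.sum_prod_type, hP0]
  refine ⟨P0, fun u x => if P0 u = 0 then ∑ v, A v x else A u x / P0 u,
    fun u y => if P0 u = 0 then ∑ v, B v y else B u y / P0 u,
    fun u x y => P' (u, x, y) / (A u x * B u y / P0 u), fun u => rfl, ?_, ?_, ?_, ?_,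
    fun u hu x => if_neg hu, fun u hu y => if_neg hu, ?_, ?_, ?_⟩
  · intro u x
    dsimp only
    split_ifs
    · exact Finset.sum_nonneg fun _ _ => hA0 _ _
    · exact div_nonneg (hA0 _ _) (hP00 _)
  · intro u
    by_cases hu : P0 u = 0
    · simp only [hu, if_true]
      rw [Finset.sum_comm]
      simp only [hAs, hP1]
    · simp only [hu, if_false, ← Finset.sum_div, hAs]
      exact div_self hu
  · intro u x
    dsimp only
    split_ifs
    · exact Finset.sum_nonneg fun _ _ => hB0 _ _
    · exact div_nonneg (hB0 _ _) (hP00 _)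
  · intro u
    by_cases hu : P0 u = 0
    · simp only [hu, if_true]
      rw [Finset.sum_comm]
      simp only [hBs, hP1]
    · simp only [hu, if_false, ← Finset.sum_div, hBs]
      exact div_self hu
  · exact fun u x y => div_nonneg (hP'0 _)
      (div_nonneg (mul_nonneg (hA0 _ _) (hB0 _ _)) (hP00 _))
  · exact fun u x y => div_le_of_le_mul₀ (div_nonneg (mul_nonneg (hA0 _ _) (hB0 _ _)) (hP00 _))
      hH.le (hP'H (u, x, y))
  · intro u x y
    have hle : P' (u, x, y) ≤ H * (A u x * B u y / P0 u) := hP'H (u, x, y)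
    have hz : A u x * B u y / P0 u = 0 → P' (u, x, y) = 0 := fun e =>
      le_antisymm (by simpa [e] using hle) (hP'0 _)
    by_cases hQ : A u x * B u y / P0 u = 0
    · simp [hz hQ]
    · have hu : P0 u ≠ 0 := fun e => hQ (by simp [e])
      simp only [hu, if_false]
      have : P0 u * (A u x / P0 u) * (B u y / P0 u) = A u x * B u y / P0 u := by
        field_simp
      rw [this, mul_div_cancel₀ _ hQ]

end Decomp

/-! ### Tests for the two receivers -/

section Information
variable {ι : Type*} [Fintype ι] [DecidableEq ι]

lemma trf_smul (c : ℝ) (σ M : Matrix ι ι ℂ) : trf ((c : ℂ) • σ) M = c * trf σ M := by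
  simp [trf]

lemma trf_sum_smul {X : Type*} [Fintype X] (c : X → ℝ) (σ : X → Matrix ι ι ℂ) (M : Matrix ι ι ℂ) :
    trf (∑ x, (c x : ℂ) • σ x) M = ∑ x, c x * trf (σ x) M := by
  simp only [← trf_smul]
  simp [trf, Finset.mul_sum, Matrix.trace_sum]

/-- Passing from the probability of acceptance to that of rejection. -/
lemma miss_le {X : Type*} [Fintype X] {p : X → ℝ} (hp : ∑ x, p x = 1) {σ E : X → Matrix ι ι ℂ}
    (hσ : ∀ x, (σ x).trace = 1) {ε : ℝ} (h : 1 - ε ≤ ∑ x, p x * trf (σ x) (E x)) :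
    ∑ x, p x * trf (σ x) (1 - E x) ≤ ε := by
  simp only [map_sub, trf_one (hσ _), mul_sub, mul_one, Finset.sum_sub_distrib, hp]
  linarith

variable {U0 U1 U2 : Type*} [Fintype U0] [Fintype U1] [Fintype U2]
  [DecidableEq U0] [DecidableEq U1] [DecidableEq U2] {p : U0 × U1 × U2 → ℝ} (hp : IsProbDist p)
  {σ : U0 × U1 × U2 → Matrix ι ι ℂ} (hσ : ∀ u, (σ u).trace = 1) {ε M : ℝ} (hε : 0 < ε) (hM : 0 < M)

include hp hσ hε hM in
/-- The test behind `I_H^ε(U₀U₁ : Y₁)`, for reduced output states `σ`. -/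
lemma test_left
    (h : ((Real.logb 2 M : ℝ) : EReal) ≤ DH ε
      (cqState fun v : U0 × U1 => ∑ u2, (p (v.1, v.2, u2) : ℂ) • σ (v.1, v.2, u2))
      (cqState fun v : U0 × U1 => ((∑ u2, p (v.1, v.2, u2) : ℝ) : ℂ) • ∑ u, (p u : ℂ) • σ u)
      - ((2 : ℝ) : EReal) - ((Real.logb 2 (1 / ε) : ℝ) : EReal)) :
    ∃ E : U0 × U1 → Matrix ι ι ℂ, (∀ v, 0 ≤ E v) ∧ (∀ v, E v ≤ 1) ∧
      ∑ u, p u * trf (σ u) (1 - E (u.1, u.2.1)) ≤ ε ∧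
      ∑ u0, ∑ u1, (∑ u2, p (u0, u1, u2)) * ∑ u, p u * trf (σ u) (E (u0, u1)) ≤ ε / (2 * M) := by
  obtain ⟨E, h0, h1, hα, hβ⟩ := exists_test hε hM h
  refine ⟨E, h0, h1, miss_le hp.2 hσ ?_, ?_⟩
  · simpa only [trf_sum_smul, Fintype.sum_prod_type] using hα
  · simp only [trf_smul, trf_sum_smul] at hβ
    simpa only [Fintype.sum_prod_type] using hβ

include hp hσ hε hM in
/-- The test behind `I_H^ε(U₁ : Y₁ | U₀)`, for reduced output states `σ`. -/
lemma test_left_cond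
    (h : ((Real.logb 2 M : ℝ) : EReal) ≤ DH ε
      (cqState fun v : U0 × U1 => ∑ u2, (p (v.1, v.2, u2) : ℂ) • σ (v.1, v.2, u2))
      (cqState fun v : U0 × U1 =>
        (((∑ u2, p (v.1, v.2, u2)) / (∑ a, ∑ b, p (v.1, a, b)) : ℝ) : ℂ) •
          ∑ a, ∑ b, (p (v.1, a, b) : ℂ) • σ (v.1, a, b))
      - ((2 : ℝ) : EReal) - ((Real.logb 2 (1 / ε) : ℝ) : EReal)) :
    ∃ E : U0 × U1 → Matrix ι ι ℂ, (∀ v, 0 ≤ E v) ∧ (∀ v, E v ≤ 1) ∧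
      ∑ u, p u * trf (σ u) (1 - E (u.1, u.2.1)) ≤ ε ∧
      ∑ u0, ∑ u1, (∑ u2, p (u0, u1, u2)) / (∑ a, ∑ b, p (u0, a, b)) *
        ∑ a, ∑ b, p (u0, a, b) * trf (σ (u0, a, b)) (E (u0, u1)) ≤ ε / (2 * M) := by
  obtain ⟨E, h0, h1, hα, hβ⟩ := exists_test hε hM h
  refine ⟨E, h0, h1, miss_le hp.2 hσ ?_, ?_⟩
  · simpa only [trf_sum_smul, Fintype.sum_prod_type] using hα
  · simp only [← Fintype.sum_prod_type'] at hβ ⊢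
    simpa only [trf_smul, trf_sum_smul] using hβ

include hp hσ hε hM in
/-- The test behind `I_H^ε(U₀U₂ : Y₂)`, for reduced output states `σ`. -/
lemma test_right
    (h : ((Real.logb 2 M : ℝ) : EReal) ≤ DH ε
      (cqState fun v : U0 × U2 => ∑ u1, (p (v.1, u1, v.2) : ℂ) • σ (v.1, u1, v.2))
      (cqState fun v : U0 × U2 => ((∑ u1, p (v.1, u1, v.2) : ℝ) : ℂ) • ∑ u, (p u : ℂ) • σ u)
      - ((2 : ℝ) : EReal) - ((Real.logb 2 (1 / ε) : ℝ) : EReal)) :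
    ∃ E : U0 × U2 → Matrix ι ι ℂ, (∀ v, 0 ≤ E v) ∧ (∀ v, E v ≤ 1) ∧
      ∑ u, p u * trf (σ u) (1 - E (u.1, u.2.2)) ≤ ε ∧
      ∑ u0, ∑ u2, (∑ u1, p (u0, u1, u2)) * ∑ u, p u * trf (σ u) (E (u0, u2)) ≤ ε / (2 * M) := by
  obtain ⟨E, h0, h1, hα, hβ⟩ := exists_test hε hM h
  refine ⟨E, h0, h1, miss_le hp.2 hσ ?_, ?_⟩
  · simp only [trf_sum_smul, Fintype.sum_prod_type] at hα ⊢
    refine hα.trans_eq (Finset.sum_congr rfl fun _ _ => Finset.sum_comm)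
  · simp only [trf_smul, trf_sum_smul] at hβ
    simpa only [Fintype.sum_prod_type] using hβ

include hp hσ hε hM in
/-- The test behind `I_H^ε(U₂ : Y₂ | U₀)`, for reduced output states `σ`. -/
lemma test_right_cond
    (h : ((Real.logb 2 M : ℝ) : EReal) ≤ DH ε
      (cqState fun v : U0 × U2 => ∑ u1, (p (v.1, u1, v.2) : ℂ) • σ (v.1, u1, v.2))
      (cqState fun v : U0 × U2 =>
        (((∑ u1, p (v.1, u1, v.2)) / (∑ a, ∑ b, p (v.1, a, b)) : ℝ) : ℂ) •
          ∑ a, ∑ b, (p (v.1, a, b) : ℂ) • σ (v.1, a, b))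
      - ((2 : ℝ) : EReal) - ((Real.logb 2 (1 / ε) : ℝ) : EReal)) :
    ∃ E : U0 × U2 → Matrix ι ι ℂ, (∀ v, 0 ≤ E v) ∧ (∀ v, E v ≤ 1) ∧
      ∑ u, p u * trf (σ u) (1 - E (u.1, u.2.2)) ≤ ε ∧
      ∑ u0, ∑ u2, (∑ u1, p (u0, u1, u2)) / (∑ a, ∑ b, p (u0, a, b)) *
        ∑ a, ∑ b, p (u0, a, b) * trf (σ (u0, a, b)) (E (u0, u2)) ≤ ε / (2 * M) := by
  obtain ⟨E, h0, h1, hα, hβ⟩ := exists_test hε hM h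
  refine ⟨E, h0, h1, miss_le hp.2 hσ ?_, ?_⟩
  · simp only [trf_sum_smul, Fintype.sum_prod_type] at hα ⊢
    refine hα.trans_eq (Finset.sum_congr rfl fun _ _ => Finset.sum_comm)
  · simp only [← Fintype.sum_prod_type'] at hβ ⊢
    simpa only [trf_smul, trf_sum_smul] using hβ

end Information

/-! ### Error accounting and derandomisation -/

section Assembly

/-- The bound of `receiver_bound` at `t = 1 / √ε`, with `A`, `B` the numbers of competitors in the two
stages: the union error `10 / (1 + t)` and the accumulated type II errors are both of order `√ε`. -/
lemma decoding_error_le {ε A B : ℝ} (hε0 : 0 < ε) (hε1 : ε < 1) (hA : 0 < A) (hB : 0 < B) :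
    10 * (1 / (1 + 1 / √ε)) + 10 * ε + 4 * (1 / √ε) * (A * (ε / (2 * A)))
      + 1 / √ε * (B * (ε / (2 * B))) ≤ 22.5 * √ε := by
  set s := √ε with hs
  have hs0 : 0 < s := Real.sqrt_pos.2 hε0
  have hss : ε = s * s := (Real.mul_self_sqrt hε0.le).symm
  have hs1 : s ≤ 1 := by nlinarith
  have e1 : 1 / (1 + 1 / s) ≤ s := by
    rw [div_le_iff₀ (by positivity)]
    field_simp
    linarith
  have e2 : A * (ε / (2 * A)) = ε / 2 := by field_simp
  have e3 : B * (ε / (2 * B)) = ε / 2 := by field_simp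
  have e4 : 1 / s * ε = s := by rw [hss]; field_simp
  rw [e2, e3]
  nlinarith

/-- Derandomisation: if the expected selection-weighted success `S` is at least `c` for every message,
then some codebook `ω` with a deterministic choice of `k` for each message has average success at
least `c`. The best `k` is at least as good as a subnormalised average. -/
lemma exists_code_of_weights {Ω X κ : Type*} [Fintype Ω] [Fintype X] [Fintype κ] [Nonempty X]
    [Nonempty κ] {q : Ω → ℝ} (hq : ∀ ω, 0 ≤ q ω) (hq1 : ∑ ω, q ω = 1)
    {w S : Ω → X → κ → ℝ} (hw : ∀ ω m k, 0 ≤ w ω m k) (hw1 : ∀ ω m, ∑ k, w ω m k ≤ 1)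
    (hS : ∀ ω m k, 0 ≤ S ω m k) {c : ℝ}
    (h : ∀ m, c ≤ Ex q (fun ω => ∑ k, w ω m k * S ω m k)) :
    ∃ (ω : Ω) (f : X → κ), c ≤ (Fintype.card X : ℝ)⁻¹ * ∑ m, S ω m (f m) := by
  have hc : (0 : ℝ) < Fintype.card X := by exact_mod_cast Fintype.card_pos
  have h1 : c ≤ Ex q (fun ω => (Fintype.card X : ℝ)⁻¹ * ∑ m, ∑ k, w ω m k * S ω m k) := by
    rw [Ex_mul_left, Ex_sum, inv_mul_eq_div, le_div_iff₀ hc]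
    calc c * Fintype.card X = ∑ _m : X, c := by simp [mul_comm]
      _ ≤ _ := Finset.sum_le_sum fun m _ => h m
  obtain ⟨ω, hω⟩ := exists_le_of_Ex_le hq hq1 h1
  choose f hf using fun m => Finite.exists_max (S ω m)
  refine ⟨ω, f, hω.trans (mul_le_mul_of_nonneg_left (Finset.sum_le_sum fun m _ => ?_)
    (by positivity))⟩
  calc ∑ k, w ω m k * S ω m k ≤ ∑ k, w ω m k * S ω m (f m) :=
        Finset.sum_le_sum fun k _ => mul_le_mul_of_nonneg_left (hf m k) (hw ω m k)
    _ = (∑ k, w ω m k) * S ω m (f m) := by rw [Finset.sum_mul]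
    _ ≤ 1 * S ω m (f m) := mul_le_mul_of_nonneg_right (hw1 ω m) (hS _ _ _)
    _ = _ := one_mul _

end Assembly

section Marton

variable {U0 U1 U2 : Type*} [Fintype U0] [Fintype U1] [Fintype U2]
  [DecidableEq U0] [DecidableEq U1] [DecidableEq U2] {d1 d2 : ℕ}

/-- One-shot Marton inner bound with common message, pre-elimination form. -/
theorem marton_common_message_pre_elimination
    (ε : ℝ) (hε0 : 0 < ε) (hε1 : ε < 1)
    (p : U0 × U1 × U2 → ℝ) (hp : IsProbDist p)
    (ρ : U0 × U1 × U2 → Matrix (Fin d1 × Fin d2) (Fin d1 × Fin d2) ℂ)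
    (hρ : ∀ u, IsDensity (ρ u))
    (M0 M1 M2 : ℕ) (hM0 : 0 < M0) (hM1 : 0 < M1) (hM2 : 0 < M2)
    (r1 r2 : ℕ) (hr1 : 0 < r1) (hr2 : 0 < r2)
    (h1 : ((Real.logb 2 M0 + Real.logb 2 M1 + (r1 : ℝ) : ℝ) : EReal) ≤
      IH_U0U1_Y1 ε p ρ - ((2 : ℝ) : EReal) - ((Real.logb 2 (1 / ε) : ℝ) : EReal))
    (h2 : ((Real.logb 2 M0 + Real.logb 2 M2 + (r2 : ℝ) : ℝ) : EReal) ≤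
      IH_U0U2_Y2 ε p ρ - ((2 : ℝ) : EReal) - ((Real.logb 2 (1 / ε) : ℝ) : EReal))
    (h3 : ((Real.logb 2 M1 + (r1 : ℝ) : ℝ) : EReal) ≤
      IH_U1_Y1_cond_U0 ε p ρ - ((2 : ℝ) : EReal) - ((Real.logb 2 (1 / ε) : ℝ) : EReal))
    (h4 : ((Real.logb 2 M2 + (r2 : ℝ) : ℝ) : EReal) ≤
      IH_U2_Y2_cond_U0 ε p ρ - ((2 : ℝ) : EReal) - ((Real.logb 2 (1 / ε) : ℝ) : EReal))
    (h5 : smoothImaxCond ε p + ((2 * Real.logb 2 (1 / ε) : ℝ) : EReal) ≤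
      (((r1 : ℝ) + (r2 : ℝ) : ℝ) : EReal)) :
    ExistsBroadcastCode ρ M0 M1 M2 (2 ^ 7 * ε ^ ((1 : ℝ) / 6)) := by
  have hm0 : (0 : ℝ) < M0 := by exact_mod_cast hM0
  have hm1 : (0 : ℝ) < M1 := by exact_mod_cast hM1
  have hm2 : (0 : ℝ) < M2 := by exact_mod_cast hM2
  have lg2 : ∀ (M : ℝ) (r : ℕ), 0 < M → Real.logb 2 M + r = Real.logb 2 (M * 2 ^ r) :=
    fun M r hM => by
      rw [Real.logb_mul hM.ne' (by positivity), Real.logb_pow, Real.logb_self_eq_one (by norm_num),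
        mul_one]
  have lg3 : ∀ (M M' : ℝ) (r : ℕ), 0 < M → 0 < M' →
      Real.logb 2 M + Real.logb 2 M' + r = Real.logb 2 (M * M' * 2 ^ r) := fun M M' r hM hM' => by
    rw [← Real.logb_mul hM.ne' hM'.ne', lg2 _ _ (mul_pos hM hM')]
  rw [lg3 _ _ _ hm0 hm1] at h1
  rw [lg3 _ _ _ hm0 hm2] at h2
  rw [lg2 _ _ hm1] at h3
  rw [lg2 _ _ hm2] at h4
  have hR : ∀ u, (trR (ρ u)).PosSemidef := fun u => trR_psd (hρ u).1
  have hL : ∀ u, (trL (ρ u)).PosSemidef := fun u => trL_psd (hρ u).1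
  have hR1 : ∀ u, (trR (ρ u)).trace = 1 := fun u => (trR_trace _).trans (hρ u).2
  have hL1 : ∀ u, (trL (ρ u)).trace = 1 := fun u => (trL_trace _).trans (hρ u).2
  obtain ⟨E1, E10, E11, E1α, E1β⟩ := test_left hp hR1 hε0 (by positivity) h1
  obtain ⟨E2, E20, E21, E2α, E2β⟩ := test_right hp hL1 hε0 (by positivity) h2
  obtain ⟨E3, E30, E31, E3α, E3β⟩ := test_left_cond hp hR1 hε0 (by positivity) h3
  obtain ⟨E4, E40, E41, E4α, E4β⟩ := test_right_cond hp hL1 hε0 (by positivity) h4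
  obtain ⟨P', H, P'0, P'p, P's, H0, P'H, HN⟩ := exists_smoothing hε0 hp.2 h5
  obtain ⟨P0, a, b, h, hP0, ha, ha1, hb, hb1, haP, hbP, hh, hhH, hfac⟩ :=
    exists_decomposition hp P'0 H0 P'H
  have hP : ∀ u, 0 ≤ P0 u := fun u => by
    rw [hP0]; exact Finset.sum_nonneg fun _ _ => Finset.sum_nonneg fun _ _ => hp.1 _
  have hP1 : ∑ u, P0 u = 1 := by
    rw [← hp.2, Fintype.sum_prod_type]
    simp only [Fintype.sum_prod_type, hP0]
  have hz : ∀ u, P0 u = 0 → ∀ x y, p (u, x, y) = 0 := fun u hu x y => by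
    rw [hP0, Finset.sum_eq_zero_iff_of_nonneg fun _ _ => Finset.sum_nonneg fun _ _ => hp.1 _] at hu
    exact (Finset.sum_eq_zero_iff_of_nonneg fun _ _ => hp.1 _).1 (hu x (Finset.mem_univ _)) y
      (Finset.mem_univ _)
  have hPa : ∀ u x, P0 u * a u x = ∑ y, p (u, x, y) := fun u x => by
    by_cases hu : P0 u = 0
    · simp [hu, hz u hu]
    · rw [haP u hu, mul_div_cancel₀ _ hu]
  have hPb : ∀ u y, P0 u * b u y = ∑ x, p (u, x, y) := fun u y => by
    by_cases hu : P0 u = 0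
    · simp [hu, hz u hu]
    · rw [hbP u hu, mul_div_cancel₀ _ hu]
  have hdom : ∀ u0 u1 u2, P0 u0 * a u0 u1 * b u0 u2 * h u0 u1 u2 ≤ p (u0, u1, u2) :=
    fun u0 u1 u2 => (hfac u0 u1 u2).trans_le (P'p _)
  have hca : ∀ u0, 0 < P0 u0 → ∀ u, a u0 u * ∑ v, b u0 v * h u0 u v ≤ a u0 u :=
    fun u0 hu u => by
      refine le_of_mul_le_mul_left ?_ hu
      rw [hPa, Finset.mul_sum, Finset.mul_sum]
      exact Finset.sum_le_sum fun v _ => by linarith [hdom u0 u v]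
  have hcb : ∀ u0, 0 < P0 u0 → ∀ v, b u0 v * ∑ u, a u0 u * h u0 u v ≤ b u0 v :=
    fun u0 hu v => by
      refine le_of_mul_le_mul_left ?_ hu
      rw [hPb, Finset.mul_sum, Finset.mul_sum]
      exact Finset.sum_le_sum fun u _ => by linarith [hdom u0 u v]
  simp only [← hPa, ← hPb] at E1β E2β
  have E3β' : ∑ u0, ∑ u', a u0 u' * ∑ u1, ∑ u2,
      p (u0, u1, u2) * trf (trR (ρ (u0, u1, u2))) (E3 (u0, u')) ≤ ε / (2 * (M1 * 2 ^ r1)) := by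
    refine le_trans (le_of_eq ?_) E3β
    refine Finset.sum_congr rfl fun u0 _ => Finset.sum_congr rfl fun u' _ => ?_
    by_cases hu : P0 u0 = 0
    · simp [hz u0 hu]
    · rw [haP u0 hu, hP0]
  have E4β' : ∑ u0, ∑ u', b u0 u' * ∑ u1, ∑ u2,
      p (u0, u1, u2) * trf (trL (ρ (u0, u1, u2))) (E4 (u0, u')) ≤ ε / (2 * (M2 * 2 ^ r2)) := by
    refine le_trans (le_of_eq ?_) E4β
    refine Finset.sum_congr rfl fun u0 _ => Finset.sum_congr rfl fun u' _ => ?_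
    by_cases hu : P0 u0 = 0
    · simp [hz u0 hu]
    · rw [hbP u0 hu, hP0]
  have hs0 : 0 < √ε := Real.sqrt_pos.2 hε0
  have : NeZero M0 := ⟨hM0.ne'⟩
  have : NeZero M1 := ⟨hM1.ne'⟩
  have : NeZero M2 := ⟨hM2.ne'⟩
  obtain ⟨Λ, hΛ0, hΛ1, hΛ⟩ := receiver_left (I := Fin M0) (J1 := Fin M1) (J2 := Fin M2)
    (K1 := Fin (2 ^ r1)) (K2 := Fin (2 ^ r2)) hP hP1 ha ha1 hb hb1 hh hdom hR hR1 E10 E11 E30 E31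
    (t := 1 / √ε) (by positivity) (by positivity) (by positivity) E1α E3α E1β E3β'
  obtain ⟨Λ', hΛ'0, hΛ'1, hΛ'⟩ := receiver_right (I := Fin M0) (J1 := Fin M1) (J2 := Fin M2)
    (K1 := Fin (2 ^ r1)) (K2 := Fin (2 ^ r2)) hP hP1 ha ha1 hb hb1 hh hdom hL hL1 E20 E21 E40 E41
    (t := 1 / √ε) (by positivity) (by positivity) (by positivity) E2α E4α E2β E4β'
  simp only [Fintype.card_fin, Nat.cast_pow, Nat.cast_ofNat] at hΛ hΛ'
  have hB1 := blockLaw_sum (J1 := Fin M1) (J2 := Fin M2) (K1 := Fin (2 ^ r1))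
    (K2 := Fin (2 ^ r2)) hP1 ha1 hb1
  have hB0 := blockLaw_nonneg (J1 := Fin M1) (J2 := Fin M2) (K1 := Fin (2 ^ r1))
    (K2 := Fin (2 ^ r2)) hP ha hb
  -- the covering lemma with `c = √ε`; `1 - ∑ P' ≤ ε` and `H / 2 ^ (r1 + r2) ≤ 2 ε²`
  have hcover : ∀ (i : Fin M0) (j1 : Fin M1) (j2 : Fin M2), 1 - 1.75 * √ε ≤
      Ex (piLaw (blockLaw P0 a b))
        (fun C : Fin M0 → Block U0 U1 U2 (Fin M1) (Fin M2) (Fin (2 ^ r1)) (Fin (2 ^ r2)) =>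
          ∑ k, weight h (C i) j1 j2 k) := fun i j1 j2 => by
    rw [Ex_pi_one hB1 i (fun B => ∑ k, weight h B j1 j2 k)]
    refine le_trans ?_ (Ex_block_cover hP hP1 ha ha1 hb hb1 hh hhH hca hcb hs0 H0.le j1 j2)
    have e : ∑ u0, ∑ u1, ∑ u2, P0 u0 * a u0 u1 * b u0 u2 * h u0 u1 u2 = ∑ u, P' u := by
      simp only [hfac, Fintype.sum_prod_type]
    rw [e]
    simp only [Fintype.card_fin, Nat.cast_pow, Nat.cast_ofNat]
    have e2 : ((1 - ∑ u, P' u) + H / (2 ^ r1 * 2 ^ r2)) / (4 * √ε) ≤ 0.75 * √ε := by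
      rw [div_le_iff₀ (by positivity)]
      have := Real.mul_self_sqrt hε0.le
      nlinarith
    linarith
  -- the constant is `1.75 + 2 * 22.5`, from covering and the two receivers
  have hmain : ∀ m : Fin M0 × Fin M1 × Fin M2, 1 - 46.75 * √ε ≤
      Ex (piLaw (blockLaw P0 a b))
        (fun C : Fin M0 → Block U0 U1 U2 (Fin M1) (Fin M2) (Fin (2 ^ r1)) (Fin (2 ^ r2)) =>
          ∑ k, weight h (C m.1) m.2.1 m.2.2 k *
            trf (ρ (word (C m.1) m.2.1 m.2.2 k)) (Λ C (m.1, m.2.1) ⊗ₖ Λ' C (m.1, m.2.2))) := by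
    rintro ⟨i, j1, j2⟩
    have e1 := (hΛ i j1 j2).trans (decoding_error_le hε0 hε1 (A := M1 * 2 ^ r1)
      (B := M0 * M1 * 2 ^ r1) (by positivity) (by positivity))
    have e2 := (hΛ' i j1 j2).trans (decoding_error_le hε0 hε1 (A := M2 * 2 ^ r2)
      (B := M0 * M2 * 2 ^ r2) (by positivity) (by positivity))
    have e3 := hcover i j1 j2
    have key := Ex_mono (piLaw_nonneg hB0)
      (fun C : Fin M0 → Block U0 U1 U2 (Fin M1) (Fin M2) (Fin (2 ^ r1)) (Fin (2 ^ r2)) =>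
        Finset.sum_le_sum fun k (_ : k ∈ Finset.univ) =>
          mul_le_mul_of_nonneg_left (trf_kron (hρ (word (C i) j1 j2 k)).1
            (hρ (word (C i) j1 j2 k)).2 (A := Λ C (i, j1)) (B := Λ' C (i, j2))
            ((Finset.single_le_sum (fun m _ => hΛ0 C m) (Finset.mem_univ (i, j1))).trans (hΛ1 C))
            ((Finset.single_le_sum (fun m _ => hΛ'0 C m) (Finset.mem_univ (i, j2))).trans
              (hΛ'1 C)))
            (sel_nonneg (hh (C i).1) ((C i).2.1 j1) ((C i).2.2 j2) k))
    refine le_trans ?_ key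
    simp only [mul_sub, mul_one, Finset.sum_sub_distrib, Ex_sub]
    simp only [weight] at e1 e2 e3
    linarith
  obtain ⟨C, f, hC⟩ := exists_code_of_weights
    (w := fun (C : Fin M0 → Block U0 U1 U2 (Fin M1) (Fin M2) (Fin (2 ^ r1)) (Fin (2 ^ r2)))
      (m : Fin M0 × Fin M1 × Fin M2) k => weight h (C m.1) m.2.1 m.2.2 k)
    (S := fun C m k =>
      trf (ρ (word (C m.1) m.2.1 m.2.2 k)) (Λ C (m.1, m.2.1) ⊗ₖ Λ' C (m.1, m.2.2)))
    (piLaw_nonneg hB0) (piLaw_sum hB1)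
    (fun C m k => sel_nonneg (hh (C m.1).1) ((C m.1).2.1 m.2.1) ((C m.1).2.2 m.2.2) k)
    (fun C m => sel_sum_le _ _)
    (fun C m k => trf_nonneg (hρ (word (C m.1) m.2.1 m.2.2 k)).1
      (((Matrix.nonneg_iff_posSemidef.1 (hΛ0 C (m.1, m.2.1))).kronecker
        (Matrix.nonneg_iff_posSemidef.1 (hΛ'0 C (m.1, m.2.2)))).nonneg)) hmain
  refine ⟨fun m => word (C m.1) m.2.1 m.2.2 (f m), Λ C, Λ' C,
    fun m => Matrix.nonneg_iff_posSemidef.1 (hΛ0 C m), hΛ1 C,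
    fun m => Matrix.nonneg_iff_posSemidef.1 (hΛ'0 C m), hΛ'1 C, ?_⟩
  have hcard : (Fintype.card (Fin M0 × Fin M1 × Fin M2) : ℝ) = M0 * M1 * M2 := by
    simp [mul_assoc]
  rw [hcard] at hC
  refine le_trans ?_ hC
  have : √ε ≤ ε ^ ((1 : ℝ) / 6) := by
    rw [Real.sqrt_eq_rpow]
    exact Real.rpow_le_rpow_of_exponent_ge hε0 hε1.le (by norm_num)
  linarith

end Marton
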